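/- Let n be a positive integer, let ε > 0, and let G be a subgroup of the symmetric group S_n, with δ_G = 1/[S_n : G] where [S_n : G] is the index of G in S_n. Then there exists a constant C, depending only on n and ε, such that for every real H ≥ 1 the number of tuples (a_1, …, a_n) ∈ ℤ^n with |a_i| ≤ H for 1 ≤ i ≤ n and such that the polynomial f = X^n + a_1X^{n-1} + ⋯ + a_n is separable and has Galois group G is at most C·H^{n-1+δ_G+ε}. -/

import Mathlib

open Polynomial

/-- A monic separable polynomial `f ∈ ℚ[X]` of degree `n` *has Galois group `G`*, for `G` a
subgroup of the symmetric group on `n` letters, if there is a labelling of the `n` distinct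
roots of `f` in its splitting field by `Fin n` such that the subgroup `G` consists exactly of
those permutations of `Fin n` that are induced by elements of the Galois group of the splitting
field of `f` over `ℚ` acting naturally on the roots. -/
def HasGaloisGroup (n : ℕ) (f : Polynomial ℚ) (G : Subgroup (Equiv.Perm (Fin n))) : Prop :=
  ∃ e : Fin n ≃ (f.rootSet f.SplittingField),
    ∀ σ : Equiv.Perm (Fin n), σ ∈ G ↔ ∃ g : f.Gal, ∀ i : Fin n, g • (e i) = e (σ i)


lemma sum_range_card_le (S : Finset ℕ) : ∑ i ∈ Finset.range S.card, i ≤ ∑ i ∈ S, i := by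
  induction S using Finset.induction_on_max with
  | empty => simp
  | insert a s ha ih =>
    have hn : a ∉ s := fun h => lt_irrefl _ (ha a h)
    rw [Finset.card_insert_of_notMem hn, Finset.sum_range_succ, Finset.sum_insert hn]
    have : s.card ≤ a := by
      have : s ⊆ Finset.range a := fun x hx => Finset.mem_range.2 (ha x hx)
      simpa using Finset.card_le_card this
    omega

lemma det_eval_dvd {ι : Type*} [Fintype ι] [DecidableEq ι] (p : ℤ) (x : ι → ℤ)
    (hx : ∀ i, p ∣ x i) (g : ι → ℤ[X]) :
    p ^ (∑ i ∈ Finset.range (Fintype.card ι), i) ∣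
      (Matrix.of fun i j => (g j).eval (x i)).det := by
  choose u hu using hx
  set L := (Finset.univ.sup fun j => (g j).natDegree) + 1 with hL
  have h1 : (Matrix.of fun i j => (g j).eval (x i)).det =
      Matrix.detRowAlternating (R := ℤ) (n := ι) (fun j => ∑ l ∈ Finset.range L,
        ((g j).coeff l * p ^ l) • (fun i => u i ^ l)) := by
    rw [← Matrix.det_transpose]
    change Matrix.detRowAlternating (R := ℤ) (n := ι) _ = _
    congr 1
    ext j i
    simp only [Matrix.transpose_apply, Matrix.of_apply, Finset.sum_apply, Pi.smul_apply, smul_eq_mul]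
    rw [Polynomial.eval_eq_sum_range' (n := L)]
    · refine Finset.sum_congr rfl fun l _ => ?_
      rw [hu i]; ring
    · have := Finset.le_sup (f := fun j => (g j).natDegree) (Finset.mem_univ j)
      omega
  rw [h1]
  change _ ∣ (Matrix.detRowAlternating (R := ℤ) (n := ι)).toMultilinearMap _
  rw [MultilinearMap.map_sum_finset]
  refine Finset.dvd_sum fun r _ => ?_
  rw [MultilinearMap.map_smul_univ]
  by_cases hr : Function.Injective r
  · refine Dvd.dvd.mul_right ?_ _
    rw [Finset.prod_mul_distrib]
    refine Dvd.dvd.mul_left ?_ _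
    rw [Finset.prod_pow_eq_pow_sum]
    refine pow_dvd_pow _ ?_
    have := sum_range_card_le (Finset.univ.image r)
    rw [Finset.card_image_of_injective _ hr, Finset.sum_image (fun a _ b _ h => hr h)] at this
    simpa using this
  · simp only [Function.Injective, not_forall] at hr
    obtain ⟨a, b, hab, hne⟩ := hr
    have : (Matrix.detRowAlternating (R := ℤ) (n := ι)) (fun j => (fun i => u i ^ (r j))) = 0 :=
      AlternatingMap.map_eq_zero_of_eq _ _ (i := a) (j := b) (by simp only [hab]) hne
    erw [this]
    simp

lemma det_dvd {ι : Type*} [Fintype ι] [DecidableEq ι] (p : ℤ) (x : ι → ℤ)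
    (hx : ∀ i, p ∣ x i) (g : ι → ℤ[X]) (M : Matrix ι ι ℤ)
    (hM : ∀ i j, p ^ (∑ i ∈ Finset.range (Fintype.card ι), i) ∣ M i j - (g j).eval (x i)) :
    p ^ (∑ i ∈ Finset.range (Fintype.card ι), i) ∣ M.det := by
  have h := det_eval_dvd p x hx g
  set q := p ^ (∑ i ∈ Finset.range (Fintype.card ι), i)
  rw [← Ideal.mem_span_singleton, ← Ideal.Quotient.eq_zero_iff_mem] at h ⊢
  rw [← h, RingHom.map_det, RingHom.map_det]
  congr 1
  ext i j
  simp only [RingHom.mapMatrix_apply, Matrix.map_apply, Matrix.of_apply]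
  rw [Ideal.Quotient.eq, Ideal.mem_span_singleton]
  exact hM i j

lemma eval_eval2_comp (Φ : ℤ[X][X]) (t0 x : ℤ) (g : ℤ[X]) :
    (Φ.eval₂ (compRingHom (X + C t0)) g).eval x = evalEval (x + t0) (g.eval x) Φ := by
  induction Φ using Polynomial.induction_on' with
  | add p q hp hq => rw [eval₂_add, eval_add, hp, hq, evalEval_add]
  | monomial n a => simp [evalEval, eval₂_monomial]

lemma hensel_poly (Φ : ℤ[X][X]) (p w t0 z0 : ℤ)
    (hw : p ∣ w * evalEval t0 z0 (derivative Φ) - 1) (k : ℕ) :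
    ∃ g : ℤ[X], ∀ t z : ℤ, p ∣ t - t0 → p ∣ z - z0 → evalEval t z Φ = 0 →
      p ^ (k + 1) ∣ z - g.eval (t - t0) := by
  induction k with
  | zero => exact ⟨C z0, fun t z _ hz _ => by simpa using hz⟩
  | succ k ih =>
    obtain ⟨g, hg⟩ := ih
    refine ⟨g - C w * Φ.eval₂ (compRingHom (X + C t0)) g, fun t z ht hz h0 => ?_⟩
    have h1 := hg t z ht hz h0
    rw [eval_sub, eval_mul, eval_C, eval_eval2_comp, sub_add_cancel]
    set y := g.eval (t - t0) with hy
    have hpy : p ∣ z - y := (dvd_pow_self p (Nat.succ_ne_zero k)).trans h1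
    -- Taylor
    set F := Φ.map (evalRingHom t) with hF
    have hFe : ∀ v, F.eval v = evalEval t v Φ := fun v => by
      rw [hF, ← Polynomial.map_evalRingHom_eval]
    have hFd : ∀ v, (derivative F).eval v = evalEval t v (derivative Φ) := fun v => by
      rw [hF, derivative_map, ← Polynomial.map_evalRingHom_eval]
    obtain ⟨c, hc⟩ := Polynomial.binomExpansion F y (z - y)
    rw [add_sub_cancel, hFe, h0, hFe, hFd] at hc
    have hD : p ∣ evalEval t y (derivative Φ) - evalEval t0 z0 (derivative Φ) := by
      have e1 : p ∣ evalEval t y (derivative Φ) - evalEval t z0 (derivative Φ) := by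
        rw [← hFd, ← hFd]
        refine Dvd.dvd.trans ?_ (Polynomial.sub_dvd_eval_sub y z0 _)
        have := dvd_sub hz hpy
        rwa [sub_sub_sub_cancel_left] at this
      have e2 : p ∣ evalEval t z0 (derivative Φ) - evalEval t0 z0 (derivative Φ) := by
        unfold evalEval
        exact ht.trans (Polynomial.sub_dvd_eval_sub t t0 _)
      simpa using dvd_add e1 e2
    obtain ⟨a, ha⟩ := h1
    obtain ⟨b, hb⟩ := hD
    obtain ⟨e, he⟩ := hw
    obtain ⟨f, hf⟩ := hpy
    have hEv : evalEval t y Φ = - (evalEval t y (derivative Φ) * (z - y) + c * (z-y)^2) := by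
      linarith
    have hE : evalEval t y (derivative Φ) = evalEval t0 z0 (derivative Φ) + p * b := by linarith
    rw [hEv, hE]
    set D := evalEval t0 z0 (derivative Φ)
    refine ⟨-(a * (e + w * b + w * c * f)), ?_⟩
    have : z - (y - w * -((D + p * b) * (z - y) + c * (z - y) ^ 2)) =
      -((z - y) * ((w * D - 1) + p * (w*b) + w * c * (z - y))) := by ring
    rw [this, he]
    nth_rewrite 2 [hf]
    rw [ha]
    ring

lemma natDegree_det_le_mul {ι : Type*} [Fintype ι] [DecidableEq ι] (M : Matrix ι ι ℚ[X]) (E : ℕ)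
    (h : ∀ i j, (M i j).natDegree ≤ E) : M.det.natDegree ≤ Fintype.card ι * E := by
  rw [Matrix.det_apply]
  refine natDegree_sum_le_of_forall_le _ _ fun σ _ => ?_
  refine (natDegree_smul_le _ _).trans ?_
  refine (natDegree_prod_le _ _).trans ?_
  refine (Finset.sum_le_sum fun i _ => h _ _).trans ?_
  simp

lemma common_zero (Φ Q : ℚ[X][X]) (E : ℕ) (hm : Φ.Monic) (hi : Irreducible Φ) (hQ : Q ≠ 0)
    (hd : Q.natDegree < Φ.natDegree) (hΦE : ∀ l, (Φ.coeff l).natDegree ≤ E)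
    (hQE : ∀ l, (Q.coeff l).natDegree ≤ E) :
    ∃ r : ℚ[X], r ≠ 0 ∧ r.natDegree ≤ (2 * Φ.natDegree) * E ∧
      ∀ t z : ℚ, evalEval t z Φ = 0 → evalEval t z Q = 0 → r.eval t = 0 := by
  refine ⟨resultant Φ Q, ?_, ?_, ?_⟩
  · intro h0
    let φ := algebraMap ℚ[X] (FractionRing ℚ[X])
    have hφ : Function.Injective φ := IsFractionRing.injective _ _
    have h1 : resultant (Φ.map φ) (Q.map φ) = 0 := by
      have := resultant_map_map Φ Q Φ.natDegree Q.natDegree φ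
      rw [h0, map_zero] at this
      rwa [natDegree_map_eq_of_injective hφ, natDegree_map_eq_of_injective hφ]
    rw [resultant_eq_zero_iff] at h1
    have hirr : Irreducible (Φ.map φ) :=
      (hm.irreducible_iff_irreducible_map_fraction_map).1 hi
    apply h1.2
    rw [hirr.coprime_iff_not_dvd]
    intro hdvd
    have := natDegree_le_of_dvd hdvd ((Polynomial.map_ne_zero_iff hφ).2 hQ)
    rw [natDegree_map_eq_of_injective hφ, natDegree_map_eq_of_injective hφ] at this
    omega
  · unfold resultant
    refine (natDegree_det_le_mul _ E ?_).trans ?_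
    · intro i j
      unfold sylvester
      simp only [Matrix.of_apply]
      induction j using Fin.addCases with
      | left j => simp only [Fin.addCases_left]; split_ifs <;> simp [hQE]
      | right j => simp only [Fin.addCases_right]; split_ifs <;> simp [hΦE]
    · simp only [Fintype.card_fin]
      gcongr
      omega
  · intro t z h1 h2
    obtain ⟨p, q, -, -, h⟩ := exists_mul_add_mul_eq_C_resultant (m := Φ.natDegree)
      (n := Q.natDegree) Φ Q le_rfl le_rfl (by left; omega)
    have := congrArg (evalEval t z) h
    rw [evalEval_add, evalEval_mul, evalEval_mul, h1, h2] at this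
    rw [evalEval_C] at this
    simpa using this.symm

lemma common_zero_card (Φ Q : ℚ[X][X]) (E : ℕ) (hm : Φ.Monic) (hi : Irreducible Φ) (hQ : Q ≠ 0)
    (hd : Q.natDegree < Φ.natDegree) (hΦE : ∀ l, (Φ.coeff l).natDegree ≤ E)
    (hQE : ∀ l, (Q.coeff l).natDegree ≤ E) (T : Finset ℤ)
    (hT : ∀ t ∈ T, ∃ z : ℤ, evalEval (t : ℚ) (z : ℚ) Φ = 0 ∧ evalEval (t : ℚ) (z : ℚ) Q = 0) :
    T.card ≤ (2 * Φ.natDegree) * E := by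
  obtain ⟨r, hr, hrd, h⟩ := common_zero Φ Q E hm hi hQ hd hΦE hQE
  refine le_trans ?_ hrd
  have : (T.image (fun t : ℤ => (t : ℚ))).card = T.card :=
    Finset.card_image_of_injective _ Int.cast_injective
  rw [← this]
  refine (Finset.card_le_card (t := r.roots.toFinset) ?_).trans
    ((Multiset.toFinset_card_le _).trans (card_roots' r))
  intro x hx
  obtain ⟨t, ht, rfl⟩ := Finset.mem_image.1 hx
  obtain ⟨z, h1, h2⟩ := hT t ht
  simpa [hr] using h _ _ h1 h2

/-- If all maximal minors vanish, there is a nontrivial relation. -/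
lemma exists_relation {ι : Type*} [Fintype ι] [DecidableEq ι] {α : Type*} (T : Set α) (v : α → ι → ℤ)
    (h : ∀ s : ι → α, (∀ i, s i ∈ T) → (Matrix.of fun i j => v (s i) j).det = 0) :
    ∃ c : ι → ℚ, c ≠ 0 ∧ ∀ t ∈ T, ∑ j, c j * (v t j : ℚ) = 0 := by
  classical
  let w : α → ι → ℚ := fun t j => (v t j : ℚ)
  by_cases hs : Submodule.span ℚ (w '' T) = ⊤
  · exfalso
    obtain ⟨b, hb, hsp, hli⟩ := exists_linearIndependent ℚ (w '' T)
    rw [hs] at hsp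
    let B := Module.Basis.mk hli (by simpa using hsp.ge)
    have : Finite b := hli.finite
    have e : ι ≃ b := (Pi.basisFun ℚ ι).indexEquiv B
    have hch : ∀ i : ι, ∃ t ∈ T, w t = (e i : ι → ℚ) := fun i => by
      obtain ⟨t, ht, h⟩ := hb (e i).2
      exact ⟨t, ht, h⟩
    choose s hsT hsw using hch
    have h0 := h s hsT
    have hli2 : LinearIndependent ℚ (fun i => w (s i)) := by
      have := hli.comp e e.injective
      have he : (fun i => w (s i)) = (Subtype.val ∘ e : ι → ι → ℚ) := by
        funext i
        simp [hsw]
      rw [he]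
      exact this
    have h1 : IsUnit (Matrix.of fun i j => w (s i) j) := by
      rw [← Matrix.linearIndependent_rows_iff_isUnit]
      exact hli2
    rw [Matrix.isUnit_iff_isUnit_det] at h1
    have h2 : (Matrix.of fun i j => w (s i) j) =
        (Int.castRingHom ℚ).mapMatrix (Matrix.of fun i j => v (s i) j) := by
      ext i j; simp [w]
    rw [h2, ← RingHom.map_det, h0] at h1
    simp at h1
  · obtain ⟨f, hf, hle⟩ := Submodule.exists_le_ker_of_lt_top _ (lt_top_iff_ne_top.2 hs)
    refine ⟨fun j => f (Pi.single j 1), ?_, fun t ht => ?_⟩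
    · intro h0
      apply hf
      apply (Pi.basisFun ℚ ι).ext
      intro i
      simpa using congrFun h0 i
    · have : f (w t) = 0 := hle (Submodule.subset_span ⟨t, ht, rfl⟩)
      rw [← this]
      conv_rhs => rw [← (Pi.basisFun ℚ ι).sum_repr (w t)]
      rw [map_sum]
      refine Finset.sum_congr rfl fun j _ => ?_
      simp [w, mul_comm]


lemma det_abs_le {ι : Type*} [Fintype ι] [DecidableEq ι] (M : Matrix ι ι ℤ) (B : ι → ℤ)
    (h : ∀ i j, |M i j| ≤ B j) : |M.det| ≤ (Fintype.card ι).factorial * ∏ j, B j := by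
  rw [Matrix.det_apply]
  refine (Finset.abs_sum_le_sum_abs _ _).trans ?_
  have : ∀ σ : Equiv.Perm ι, |Equiv.Perm.sign σ • ∏ i, M (σ i) i| ≤ ∏ j, B j := by
    intro σ
    have h1 : |Equiv.Perm.sign σ • ∏ i, M (σ i) i| = |∏ i, M (σ i) i| := by
      rcases Int.units_eq_one_or (Equiv.Perm.sign σ) with h | h <;> simp [h]
    rw [h1, Finset.abs_prod]
    exact Finset.prod_le_prod (fun _ _ => abs_nonneg _) (fun i _ => h _ _)
  refine (Finset.sum_le_sum fun σ _ => this σ).trans ?_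
  simp [Fintype.card_perm]

noncomputable def ratMap (Φ : ℤ[X][X]) : ℚ[X][X] := Φ.map (mapRingHom (Int.castRingHom ℚ))

lemma evalEval_ratMap (Φ : ℤ[X][X]) (t z : ℤ) :
    evalEval (t : ℚ) (z : ℚ) (ratMap Φ) = ((evalEval t z Φ : ℤ) : ℚ) := by
  have := Polynomial.map_mapRingHom_evalEval (Int.castRingHom ℚ) Φ t z
  simpa [ratMap] using this

noncomputable def auxPoly {m d : ℕ} (c : Fin m × Fin d → ℚ) : ℚ[X][X] :=
  ∑ ij : Fin m × Fin d, monomial (ij.2 : ℕ) (monomial (ij.1 : ℕ) (c ij))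

lemma auxPoly_coeff {m d : ℕ} (c : Fin m × Fin d → ℚ) (i : Fin m) (j : Fin d) :
    ((auxPoly c).coeff j).coeff i = c (i, j) := by
  unfold auxPoly
  rw [finsetSum_coeff, finsetSum_coeff, Finset.sum_eq_single (i, j)]
  · simp
  · rintro ⟨a, b⟩ _ hab
    rw [coeff_monomial]
    split_ifs with h1
    · rw [coeff_monomial, if_neg]
      intro h2
      exact hab (Prod.ext (Fin.ext h2) (Fin.ext h1))
    · simp
  · simp

lemma class_bound (Φ : ℤ[X][X]) (E m N Z p : ℕ) (hp : p.Prime) (hm : Φ.Monic)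
    (hi : Irreducible (ratMap Φ)) (hd : 1 ≤ Φ.natDegree)
    (hE : ∀ l, (Φ.coeff l).natDegree ≤ E) (T : Finset ℤ) (z : ℤ → ℤ) (t0 z0 : ℤ)
    (h1 : ∀ t ∈ T, |t| ≤ N) (h2 : ∀ t ∈ T, |z t| ≤ Z)
    (h3 : ∀ t ∈ T, evalEval t (z t) Φ = 0) (h4 : ∀ t ∈ T, (p : ℤ) ∣ t - t0)
    (h5 : ∀ t ∈ T, (p : ℤ) ∣ z t - z0)
    (h6 : ¬ (p : ℤ) ∣ evalEval t0 z0 (derivative Φ))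
    (hbig : (m * Φ.natDegree).factorial * ∏ ij : Fin m × Fin Φ.natDegree, N ^ (ij.1 : ℕ) * Z ^ (ij.2 : ℕ)
      < p ^ (∑ i ∈ Finset.range (m * Φ.natDegree), i)) :
    T.card ≤ (2 * Φ.natDegree) * (E + m) := by
  set d := Φ.natDegree with hdd
  set A := ∑ i ∈ Finset.range (m * d), i with hA
  have hpi : Prime (p : ℤ) := Nat.prime_iff_prime_int.1 hp
  obtain ⟨w, hw⟩ : ∃ w : ℤ, (p : ℤ) ∣ w * evalEval t0 z0 (derivative Φ) - 1 := by
    have hc : IsCoprime (p : ℤ) (evalEval t0 z0 (derivative Φ)) :=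
      (Irreducible.coprime_iff_not_dvd hpi.irreducible).2 h6
    obtain ⟨a, b, hab⟩ := hc
    exact ⟨b, -a, by linarith⟩
  obtain ⟨g, hg⟩ := hensel_poly Φ p w t0 z0 hw A
  have hcard : Fintype.card (Fin m × Fin d) = m * d := by simp
  obtain ⟨c, hc0, hc⟩ := exists_relation (ι := Fin m × Fin d) (T : Set ℤ)
    (fun t ij => t ^ (ij.1 : ℕ) * z t ^ (ij.2 : ℕ)) (by
      intro s hs
      set M : Matrix (Fin m × Fin d) (Fin m × Fin d) ℤ :=
        Matrix.of fun i j => s i ^ (j.1 : ℕ) * z (s i) ^ (j.2 : ℕ) with hM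
      have hdvd : (p : ℤ) ^ A ∣ M.det := by
        have := det_dvd (p : ℤ) (fun i => s i - t0) (fun i => h4 _ (hs i))
          (fun ij : Fin m × Fin d => (X + C t0) ^ (ij.1 : ℕ) * g ^ (ij.2 : ℕ)) M
        rw [hcard] at this
        apply this
        intro i j
        simp only [hM, Matrix.of_apply, eval_mul, eval_pow, eval_add, eval_X, eval_C,
          sub_add_cancel]
        rw [← mul_sub]
        refine Dvd.dvd.mul_left ?_ _
        refine Dvd.dvd.trans ?_ (sub_dvd_pow_sub_pow _ _ _)
        exact (pow_dvd_pow _ (Nat.le_succ A)).trans (hg _ _ (h4 _ (hs i)) (h5 _ (hs i)) (h3 _ (hs i)))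
      have hle := det_abs_le M (fun ij => (N : ℤ) ^ (ij.1 : ℕ) * (Z : ℤ) ^ (ij.2 : ℕ)) (by
        intro i j
        simp only [hM, Matrix.of_apply, abs_mul, abs_pow]
        gcongr
        · exact h1 _ (hs i)
        · exact h2 _ (hs i))
      rw [hcard] at hle
      refine Int.eq_zero_of_abs_lt_dvd hdvd (hle.trans_lt ?_)
      exact_mod_cast hbig)
  have hnd : (ratMap Φ).natDegree = d := by
    unfold ratMap
    rw [natDegree_map_eq_of_injective (Polynomial.map_injective _ Int.cast_injective)]
  have hmon : (ratMap Φ).Monic := hm.map _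
  have key := common_zero_card (ratMap Φ) (auxPoly c) (E + m) hmon hi ?_ ?_ ?_ ?_ T ?_
  · rwa [hnd] at key
  · intro h0
    apply hc0
    ext ⟨i, j⟩
    have := auxPoly_coeff c i j
    rw [h0] at this
    simpa using this.symm
  · rw [hnd]
    have : (auxPoly c).natDegree ≤ d - 1 := by
      unfold auxPoly
      refine natDegree_sum_le_of_forall_le _ _ fun ij _ => ?_
      refine (natDegree_monomial_le _).trans ?_
      have := ij.2.2
      omega
    omega
  · intro l
    unfold ratMap
    rw [coeff_map]
    refine (natDegree_map_le).trans ((hE l).trans (Nat.le_add_right _ _))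
  · intro l
    unfold auxPoly
    rw [finsetSum_coeff]
    refine natDegree_sum_le_of_forall_le _ _ fun ij _ => ?_
    rw [coeff_monomial]
    split_ifs
    · refine (natDegree_monomial_le _).trans ?_
      have := ij.1.2
      omega
    · simp
  · intro t ht
    refine ⟨z t, ?_, ?_⟩
    · rw [evalEval_ratMap, h3 t ht]; simp
    · rw [← hc t ht]
      unfold auxPoly
      rw [evalEval_finsetSum]
      refine Finset.sum_congr rfl fun ij _ => ?_
      simp [evalEval, mul_assoc]

lemma prime_bound (Φ : ℤ[X][X]) (E m N Z p : ℕ) (hp : p.Prime) (hm : Φ.Monic)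
    (hi : Irreducible (ratMap Φ)) (hd : 1 ≤ Φ.natDegree)
    (hE : ∀ l, (Φ.coeff l).natDegree ≤ E) (T : Finset ℤ) (z : ℤ → ℤ)
    (h1 : ∀ t ∈ T, |t| ≤ N) (h2 : ∀ t ∈ T, |z t| ≤ Z)
    (h3 : ∀ t ∈ T, evalEval t (z t) Φ = 0)
    (h6 : ∀ t ∈ T, ¬ (p : ℤ) ∣ evalEval t (z t) (derivative Φ))
    (hbig : (m * Φ.natDegree).factorial * ∏ ij : Fin m × Fin Φ.natDegree, N ^ (ij.1 : ℕ) * Z ^ (ij.2 : ℕ)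
      < p ^ (∑ i ∈ Finset.range (m * Φ.natDegree), i)) :
    T.card ≤ (2 * Φ.natDegree) * (E + m) * (p * Φ.natDegree) := by
  classical
  have := Fact.mk hp
  let f : ℤ → ZMod p × ZMod p := fun t => ((t : ZMod p), (z t : ZMod p))
  have hfib := Finset.card_le_mul_card_image (f := f) T ((2 * Φ.natDegree) * (E + m)) (by
    intro b hb
    obtain ⟨t0, ht0, rfl⟩ := Finset.mem_image.1 hb
    refine class_bound Φ E m N Z p hp hm hi hd hE _ z t0 (z t0) ?_ ?_ ?_ ?_ ?_ (h6 t0 ht0) hbig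
    · intro t ht; exact h1 t (Finset.mem_filter.1 ht).1
    · intro t ht; exact h2 t (Finset.mem_filter.1 ht).1
    · intro t ht; exact h3 t (Finset.mem_filter.1 ht).1
    · intro t ht
      have := congrArg Prod.fst (Finset.mem_filter.1 ht).2
      rw [← ZMod.intCast_zmod_eq_zero_iff_dvd]
      simpa [f, sub_eq_zero] using this
    · intro t ht
      have := congrArg Prod.snd (Finset.mem_filter.1 ht).2
      rw [← ZMod.intCast_zmod_eq_zero_iff_dvd]
      simpa [f, sub_eq_zero] using this)
  refine hfib.trans (Nat.mul_le_mul_left _ ?_)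
  let F : ZMod p → (ZMod p)[X] := fun τ => Φ.map (eval₂RingHom (Int.castRingHom (ZMod p)) τ)
  have hsub : T.image f ⊆ (Finset.univ : Finset (ZMod p)).biUnion
      (fun τ => ((F τ).roots.toFinset).image (fun ζ => (τ, ζ))) := by
    intro b hb
    obtain ⟨t, ht, rfl⟩ := Finset.mem_image.1 hb
    simp only [Finset.mem_biUnion, Finset.mem_univ, true_and, Finset.mem_image]
    refine ⟨(t : ZMod p), (z t : ZMod p), ?_, rfl⟩
    rw [Multiset.mem_toFinset, mem_roots ((hm.map _).ne_zero)]
    have h := congrArg (Int.castRingHom (ZMod p)) (h3 t ht)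
    rw [map_zero] at h
    rw [IsRoot, ← h, ← Polynomial.map_evalRingHom_eval]
    change (Φ.map _).eval (Int.castRingHom (ZMod p) (z t)) = _
    rw [← Polynomial.eval₂_hom, ← Polynomial.eval_map, Polynomial.map_map]
    congr 2
    apply Polynomial.ringHom_ext
    · intro a; simp
    · simp
  refine (Finset.card_le_card hsub).trans (Finset.card_biUnion_le.trans ?_)
  refine (Finset.sum_le_card_nsmul _ _ Φ.natDegree fun τ _ => ?_).trans ?_
  · refine Finset.card_image_le.trans ((Multiset.toFinset_card_le _).trans ((card_roots' _).trans ?_))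
    exact natDegree_map_le
  · simp [ZMod.card]


lemma gauss_real (n : ℕ) : ((∑ i ∈ Finset.range n, i : ℕ) : ℝ) = n * (n - 1) / 2 := by
  induction n with
  | zero => simp
  | succ n ih => rw [Finset.sum_range_succ, Nat.cast_add, ih]; push_cast; ring

lemma exists_primes (P r : ℕ) (hP : P ≠ 0) : ∃ p : ℕ → ℕ, Function.Injective p ∧
    ∀ i, (p i).Prime ∧ P ≤ p i ∧ (i < r → p i ≤ P * 2 ^ r) := by
  have h : ∀ i : ℕ, ∃ q, Nat.Prime q ∧ P * 2 ^ i < q ∧ q ≤ 2 * (P * 2 ^ i) := fun i =>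
    Nat.exists_prime_lt_and_le_two_mul _ (by positivity)
  choose p hp using h
  refine ⟨p, ?_, fun i => ⟨(hp i).1, ?_, fun hi => ?_⟩⟩
  · apply StrictMono.injective
    apply strictMono_nat_of_lt_succ
    intro n
    have h1 := (hp n).2.2
    have h2 := (hp (n+1)).2.1
    rw [pow_succ] at h2
    nlinarith
  · have := (hp i).2.1
    have h2 : 1 ≤ 2 ^ i := Nat.one_le_two_pow
    nlinarith
  · refine (hp i).2.2.trans ?_
    have : 2 ^ (i + 1) ≤ 2 ^ r := Nat.pow_le_pow_right (by norm_num) hi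
    rw [pow_succ] at this
    nlinarith

lemma root_bound (F : ℤ[X]) (hm : F.Monic) (B z : ℤ) (hB : ∀ l, |F.coeff l| ≤ B)
    (hz : F.eval z = 0) : |z| ≤ 1 + F.natDegree * B := by
  have hB0 : 0 ≤ B := (abs_nonneg _).trans (hB 0)
  by_contra hcon
  push Not at hcon
  set d := F.natDegree with hd
  have hz1 : 1 ≤ |z| := by nlinarith [Int.natCast_nonneg d]
  rw [eval_eq_sum_range, ← hd, Finset.sum_range_succ, hm.coeff_natDegree, one_mul] at hz
  have h1 : |z| ^ d = |∑ i ∈ Finset.range d, F.coeff i * z ^ i| := by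
    rw [← abs_pow, ← abs_neg]; congr 1; linarith
  rcases Nat.eq_zero_or_pos d with h0 | hpos
  · rw [h0] at h1; simp at h1
  have h2 : |∑ i ∈ Finset.range d, F.coeff i * z ^ i| ≤ d * (B * |z| ^ (d - 1)) := by
    refine (Finset.abs_sum_le_sum_abs _ _).trans ?_
    refine (Finset.sum_le_card_nsmul _ _ (B * |z| ^ (d - 1)) fun i hi => ?_).trans ?_
    · rw [abs_mul, abs_pow]
      refine mul_le_mul (hB i) ?_ (by positivity) hB0
      exact pow_le_pow_right₀ hz1 (by have := Finset.mem_range.1 hi; omega)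
    · simp
  rw [← h1] at h2
  have h3 : |z| ^ d = |z| * |z| ^ (d - 1) := by
    rw [← pow_succ']; congr 1; omega
  rw [h3] at h2
  have h4 : 0 < |z| ^ (d - 1) := by positivity
  have : |z| ≤ d * B := by
    by_contra h5
    push Not at h5
    nlinarith
  linarith

lemma deriv_bound (F : ℤ[X]) (B z Z : ℤ) (hB : ∀ l, |F.coeff l| ≤ B)
    (hZ : 1 ≤ Z) (hz : |z| ≤ Z) :
    |(derivative F).eval z| ≤ F.natDegree * (F.natDegree * B * Z ^ F.natDegree) := by
  have hB0 : 0 ≤ B := (abs_nonneg _).trans (hB 0)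
  set d := F.natDegree with hd
  rw [derivative_eval, Polynomial.sum_over_range' _ _ (d + 1) (by omega), Finset.sum_range_succ']
  · simp only [Nat.cast_zero, mul_zero, zero_mul, add_zero]
    refine (Finset.abs_sum_le_sum_abs _ _).trans ?_
    refine (Finset.sum_le_card_nsmul _ _ (d * B * Z ^ d) fun i hi => ?_).trans ?_
    · have hi := Finset.mem_range.1 hi
      rw [abs_mul, abs_mul, abs_pow]
      have e1 : |((i + 1 : ℕ) : ℤ)| ≤ d := by
        rw [abs_of_nonneg (by positivity)]; exact_mod_cast hi
      have e2 : |z| ^ (i + 1 - 1) ≤ Z ^ d := 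
        (pow_le_pow_left₀ (abs_nonneg _) hz _).trans (pow_le_pow_right₀ hZ (by omega))
      calc _ ≤ B * d * Z ^ d := by
            refine mul_le_mul (mul_le_mul (hB _) e1 (abs_nonneg _) hB0) e2 (by positivity) (by positivity)
        _ = _ := by ring
    · simp
  · intro n; simp

set_option maxHeartbeats 2000000 in
theorem BP (d E K : ℕ) (hd : 1 ≤ d) (ε : ℝ) (hε : 0 < ε) : ∃ Cst : ℝ, 0 ≤ Cst ∧ ∀ N : ℕ, 1 ≤ N →
    ∀ Φ : ℤ[X][X], Φ.Monic → Φ.natDegree = d → Irreducible (ratMap Φ) →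
    (∀ l, (Φ.coeff l).natDegree ≤ E) →
    (∀ l, ∀ t : ℤ, |t| ≤ N → |(Φ.coeff l).eval t| ≤ K * (N : ℤ) ^ K) →
    ∀ T : Finset ℤ, (∀ t ∈ T, |t| ≤ N ∧ ∃ z : ℤ, evalEval t z Φ = 0) →
    (T.card : ℝ) ≤ Cst * (N : ℝ) ^ (1 / (d : ℝ) + ε) := by
  set θ : ℝ := 1 / (d : ℝ) + ε with hθ
  set m : ℕ := ⌈(K * d / ε : ℝ)⌉₊ + 2 with hmdef
  set z1 : ℕ := 1 + d * K with hz1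
  set D0 : ℕ := d * (d * K * z1 ^ d) with hD0
  set D1 : ℕ := K + K * d with hD1
  set r : ℕ := d * D1 + 1 with hr
  set sj : ℕ := ∑ j ∈ Finset.range d, j with hsj
  set si : ℕ := ∑ j ∈ Finset.range m, j with hsi
  set A : ℕ := ∑ j ∈ Finset.range (m * d), j with hA
  set c0 : ℕ := (m * d).factorial * z1 ^ (m * sj) with hc0
  set C2 : ℕ := c0 + D0 + 1 with hC2
  set BB : ℕ := 2 * d * (E + m) with hBB
  refine ⟨BB + r * (BB * d * 2 ^ r * (C2 + 1)), by positivity, ?_⟩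
  intro N hN Φ hm hnd hi hE hK T hT
  have hNR : (1 : ℝ) ≤ N := by exact_mod_cast hN
  have hdR : (1 : ℝ) ≤ d := by exact_mod_cast hd
  have hθ0 : 0 ≤ θ := by positivity
  have hNθ : (1 : ℝ) ≤ (N : ℝ) ^ θ := Real.one_le_rpow hNR hθ0
  set P : ℕ := ⌈(C2 : ℝ) * (N : ℝ) ^ θ⌉₊ with hP
  have hPlow : (C2 : ℝ) * (N : ℝ) ^ θ ≤ P := Nat.le_ceil _
  have hPup : (P : ℝ) ≤ (C2 + 1) * (N : ℝ) ^ θ := by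
    have := Nat.ceil_lt_add_one (a := (C2 : ℝ) * (N : ℝ) ^ θ) (by positivity)
    nlinarith
  have hC2R : (1 : ℝ) ≤ C2 := by
    have : 1 ≤ C2 := by omega
    exact_mod_cast this
  have hP0 : P ≠ 0 := by
    intro h
    rw [h] at hPlow
    push_cast at hPlow
    nlinarith
  obtain ⟨p, hpinj, hp⟩ := exists_primes P r hP0
  choose! z hz using fun t ht => (hT t ht).2
  set Z : ℕ := z1 * N ^ K with hZ
  have hZ1 : 1 ≤ Z := by
    have : 1 ≤ N ^ K := Nat.one_le_pow _ _ hN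
    have : 1 ≤ z1 := by omega
    nlinarith
  -- evaluation of Φ at t
  have hFc : ∀ t : ℤ, |t| ≤ N → ∀ l, |(Φ.map (evalRingHom t)).coeff l| ≤ K * (N : ℤ) ^ K := by
    intro t ht l
    rw [coeff_map]
    exact hK l t ht
  have hFd : ∀ t : ℤ, (Φ.map (evalRingHom t)).natDegree = d := fun t => by
    rw [hm.natDegree_map, hnd]
  have hzb : ∀ t ∈ T, |z t| ≤ Z := by
    intro t ht
    have := root_bound (Φ.map (evalRingHom t)) (hm.map _) _ (z t) (hFc t (hT t ht).1)
      (by rw [Polynomial.map_evalRingHom_eval]; exact hz t ht)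
    rw [hFd] at this
    refine this.trans ?_
    have h1 : (1 : ℤ) ≤ (N : ℤ) ^ K := one_le_pow₀ (by exact_mod_cast hN)
    rw [hZ, hz1]
    push_cast
    have h2 : (1 + (d : ℤ) * K) * (N : ℤ) ^ K = (N : ℤ) ^ K + d * (K * (N : ℤ) ^ K) := by ring
    rw [h2]
    linarith
  have hDb : ∀ t ∈ T, |evalEval t (z t) (derivative Φ)| ≤ (D0 * N ^ D1 : ℕ) := by
    intro t ht
    have := deriv_bound (Φ.map (evalRingHom t)) _ (z t) Z (hFc t (hT t ht).1) (by exact_mod_cast hZ1)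
      (hzb t ht)
    rw [hFd, derivative_map, Polynomial.map_evalRingHom_eval] at this
    refine this.trans (le_of_eq ?_)
    rw [hD0, hD1, hZ]
    push_cast
    ring
  -- big condition
  have hm2 : 2 ≤ m := by omega
  have hApos : 1 ≤ A := by
    rw [hA]
    have h2 : 1 ∈ Finset.range (m * d) := Finset.mem_range.2 (by nlinarith)
    exact Finset.single_le_sum (f := fun j => j) (fun _ _ => Nat.zero_le _) h2
  have hexp : ((d * si + K * (m * sj) : ℕ) : ℝ) ≤ θ * A := by
    push_cast
    rw [hsi, hsj, hA, gauss_real, gauss_real, gauss_real]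
    push_cast
    have hmε : (K * d : ℝ) ≤ ε * (m - 1) := by
      have := Nat.le_ceil (K * d / ε : ℝ)
      rw [hmdef]
      push_cast
      rw [div_le_iff₀ hε] at this
      nlinarith
    have hm1 : (2 : ℝ) ≤ m := by exact_mod_cast hm2
    have hθd : θ * d = 1 + ε * d := by rw [hθ]; field_simp
    have key : (m : ℝ) - 1 + K * (d - 1) ≤ θ * (m * d - 1) := by
      have e1 : θ * (m * d - 1) = m * (θ * d) - θ := by ring
      have e2 : θ ≤ 1 + ε := by
        rw [hθ]
        have : 1 / (d : ℝ) ≤ 1 := by rw [div_le_one (by positivity)]; exact hdR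
        linarith
      rw [e1, hθd]
      have hK0 : (0 : ℝ) ≤ K := by positivity
      have : ε * (m - 1) ≤ ε * (m * d - 1) := by
        apply mul_le_mul_of_nonneg_left _ hε.le
        nlinarith
      nlinarith
    have h0 : (0 : ℝ) ≤ m * d / 2 := by positivity
    have := mul_le_mul_of_nonneg_left key h0
    nlinarith
  have hprod : (∏ ij : Fin m × Fin d, N ^ (ij.1 : ℕ) * Z ^ (ij.2 : ℕ)) =
      N ^ (d * si) * Z ^ (m * sj) := by
    rw [Finset.prod_mul_distrib, Finset.prod_pow_eq_pow_sum, Finset.prod_pow_eq_pow_sum,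
      Fintype.sum_prod_type, Fintype.sum_prod_type]
    simp only [Finset.sum_const, Finset.card_univ, Fintype.card_fin, smul_eq_mul]
    rw [← Finset.mul_sum, Fin.sum_univ_eq_sum_range (fun i => i), Fin.sum_univ_eq_sum_range (fun i => i)]
  have hbig : ∀ i, (m * d).factorial * ∏ ij : Fin m × Fin d, N ^ (ij.1 : ℕ) * Z ^ (ij.2 : ℕ)
      < (p i) ^ A := by
    intro i
    rw [hprod]
    have e1 : (m * d).factorial * (N ^ (d * si) * Z ^ (m * sj)) = c0 * N ^ (d * si + K * (m * sj)) := by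
      rw [hc0, hZ]; ring
    rw [e1]
    have hpi : (C2 : ℝ) * (N : ℝ) ^ θ ≤ p i := hPlow.trans (by exact_mod_cast (hp i).2.1)
    have h1 : ((C2 : ℝ) * (N : ℝ) ^ θ) ^ A ≤ (p i : ℝ) ^ A := by gcongr
    have h2 : ((C2 : ℝ) * (N : ℝ) ^ θ) ^ A = (C2 : ℝ) ^ A * (N : ℝ) ^ (θ * A) := by
      rw [mul_pow, ← Real.rpow_mul_natCast (by positivity)]
    have h3 : (C2 : ℝ) ≤ (C2 : ℝ) ^ A := le_self_pow₀ hC2R (by omega)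
    have h4 : (N : ℝ) ^ (d * si + K * (m * sj)) ≤ (N : ℝ) ^ (θ * A) := by
      rw [← Real.rpow_natCast]
      exact Real.rpow_le_rpow_of_exponent_le hNR hexp
    have h5 : (c0 : ℝ) < C2 := by
      have : c0 < C2 := by omega
      exact_mod_cast this
    have h6 : (0 : ℝ) < (N : ℝ) ^ (d * si + K * (m * sj)) := by positivity
    have : ((c0 * N ^ (d * si + K * (m * sj)) : ℕ) : ℝ) < ((p i) ^ A : ℕ) := by
      push_cast
      calc (c0 : ℝ) * (N : ℝ) ^ (d * si + K * (m * sj)) < C2 * (N : ℝ) ^ (d * si + K * (m * sj)) := by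
            gcongr
        _ ≤ (C2 : ℝ) ^ A * (N : ℝ) ^ (θ * A) := by gcongr
        _ ≤ _ := by rw [← h2]; exact h1
    exact_mod_cast this
  -- the singular part
  classical
  let T0 := T.filter (fun t => evalEval t (z t) (derivative Φ) = 0)
  let T1 : ℕ → Finset ℤ := fun i => T.filter (fun t => ¬ (p i : ℤ) ∣ evalEval t (z t) (derivative Φ))
  have hcover : T ⊆ T0 ∪ (Finset.range r).biUnion T1 := by
    intro t ht
    by_cases h0 : evalEval t (z t) (derivative Φ) = 0
    · exact Finset.mem_union_left _ (Finset.mem_filter.2 ⟨ht, h0⟩)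
    · apply Finset.mem_union_right
      by_contra hcon
      simp only [Finset.mem_biUnion, Finset.mem_range, not_exists, not_and, T1, Finset.mem_filter,
        not_not] at hcon
      have hdiv : ∀ i ∈ Finset.range r, (p i : ℤ) ∣ evalEval t (z t) (derivative Φ) := fun i hi =>
        hcon i (Finset.mem_range.1 hi) ht
      have hprod : (∏ i ∈ Finset.range r, (p i : ℤ)) ∣ evalEval t (z t) (derivative Φ) := by
        refine Finset.prod_dvd_of_coprime ?_ hdiv
        intro i _ j _ hij
        rw [Function.onFun, Nat.isCoprime_iff_coprime]
        exact (Nat.coprime_primes (hp i).1 (hp j).1).2 (fun h => hij (hpinj h))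
      apply h0
      refine Int.eq_zero_of_abs_lt_dvd hprod ((hDb t ht).trans_lt ?_)
      have h1 : P ^ r ≤ ∏ i ∈ Finset.range r, p i := by
        have := Finset.prod_le_prod' (s := Finset.range r) (f := fun _ => P) (g := p)
          (fun i _ => (hp i).2.1)
        simpa using this
      have h2 : D0 * N ^ D1 < P ^ r := by
        have e1 : ((C2 : ℝ) * (N : ℝ) ^ θ) ^ r ≤ (P : ℝ) ^ r := by gcongr
        have e2 : ((C2 : ℝ) * (N : ℝ) ^ θ) ^ r = (C2 : ℝ) ^ r * (N : ℝ) ^ (θ * r) := by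
          rw [mul_pow, ← Real.rpow_mul_natCast (by positivity)]
        have e3 : (C2 : ℝ) ≤ (C2 : ℝ) ^ r := le_self_pow₀ hC2R (by omega)
        have e4 : (N : ℝ) ^ D1 ≤ (N : ℝ) ^ (θ * r) := by
          rw [← Real.rpow_natCast]
          apply Real.rpow_le_rpow_of_exponent_le hNR
          rw [hr]
          push_cast
          have : (1 / (d : ℝ)) * (d * D1 + 1) ≤ θ * (d * D1 + 1) := by
            apply mul_le_mul_of_nonneg_right _ (by positivity)
            rw [hθ]; linarith
          refine le_trans ?_ this
          rw [mul_add, ← mul_assoc, one_div_mul_cancel (by positivity)]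
          have : (0 : ℝ) ≤ 1 / d := by positivity
          linarith
        have e5 : (D0 : ℝ) < C2 := by
          have : D0 < C2 := by omega
          exact_mod_cast this
        have e6 : (0 : ℝ) < (N : ℝ) ^ D1 := by positivity
        have : ((D0 * N ^ D1 : ℕ) : ℝ) < (P ^ r : ℕ) := by
          push_cast
          calc (D0 : ℝ) * (N : ℝ) ^ D1 < C2 * (N : ℝ) ^ D1 := by gcongr
            _ ≤ (C2 : ℝ) ^ r * (N : ℝ) ^ (θ * r) := by gcongr
            _ ≤ _ := by rw [← e2]; exact e1
        exact_mod_cast this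
      have h3 := h2.trans_le h1
      exact_mod_cast h3
  have hT0 : T0.card ≤ BB := by
    have hnd' : (ratMap Φ).natDegree = d := by
      unfold ratMap
      rw [natDegree_map_eq_of_injective (Polynomial.map_injective _ Int.cast_injective), hnd]
    have hdd : (ratMap (derivative Φ)) = derivative (ratMap Φ) := by
      unfold ratMap; rw [derivative_map]
    have hder : (derivative (ratMap Φ)).natDegree < (ratMap Φ).natDegree := by
      apply natDegree_derivative_lt
      omega
    have hEq : ∀ l, ((ratMap Φ).coeff l).natDegree ≤ E + m := fun l => by
      unfold ratMap
      rw [coeff_map]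
      exact (natDegree_map_le).trans ((hE l).trans (Nat.le_add_right _ _))
    have := common_zero_card (ratMap Φ) (derivative (ratMap Φ)) (E + m) (hm.map _) hi ?_ hder hEq ?_ T0 ?_
    · rwa [hnd'] at this
    · intro h0
      have := derivative_eq_zero.1 h0
      omega
    · intro l
      rw [coeff_derivative]
      refine (natDegree_mul_le).trans ?_
      have : ((l : ℚ[X]) + 1).natDegree = 0 := by
        have : ((l : ℚ[X]) + 1) = ((l + 1 : ℕ) : ℚ[X]) := by push_cast; rfl
        rw [this, natDegree_natCast]
      rw [this, add_zero]
      exact hEq _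
    · intro t ht
      obtain ⟨ht, h0⟩ := Finset.mem_filter.1 ht
      refine ⟨z t, ?_, ?_⟩
      · rw [evalEval_ratMap, hz t ht]; simp
      · rw [← hdd, evalEval_ratMap, h0]; simp
  have hT1 : ∀ i ∈ Finset.range r, ((T1 i).card : ℝ) ≤ BB * d * 2 ^ r * (C2 + 1) * (N : ℝ) ^ θ := by
    intro i hi'
    have hlt := Finset.mem_range.1 hi'
    have := prime_bound Φ E m N Z (p i) (hp i).1 hm hi (by omega) hE (T1 i) z
      (fun t ht => (hT t (Finset.mem_filter.1 ht).1).1)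
      (fun t ht => hzb t (Finset.mem_filter.1 ht).1)
      (fun t ht => hz t (Finset.mem_filter.1 ht).1)
      (fun t ht => (Finset.mem_filter.1 ht).2)
      (by rw [hnd]; exact hbig i)
    rw [hnd] at this
    have h1 : (T1 i).card ≤ BB * ((P * 2 ^ r) * d) := by
      refine this.trans ?_
      rw [hBB]
      gcongr
      exact (hp i).2.2 hlt
    have h2 : ((T1 i).card : ℝ) ≤ BB * ((P * 2 ^ r) * d) := by exact_mod_cast h1
    refine h2.trans ?_
    calc (BB : ℝ) * ((P * 2 ^ r) * d) ≤ BB * ((((C2 + 1) * (N : ℝ) ^ θ) * 2 ^ r) * d) := by gcongr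
      _ = _ := by ring
  have hfin : (T.card : ℝ) ≤ T0.card + ∑ i ∈ Finset.range r, ((T1 i).card : ℝ) := by
    have := (Finset.card_le_card hcover).trans ((Finset.card_union_le _ _).trans
      (Nat.add_le_add_left Finset.card_biUnion_le _))
    exact_mod_cast this
  refine hfin.trans ?_
  have h1 : ∑ i ∈ Finset.range r, ((T1 i).card : ℝ) ≤ r * (BB * d * 2 ^ r * (C2 + 1) * (N : ℝ) ^ θ) := by
    refine (Finset.sum_le_sum hT1).trans ?_
    simp
  have h2 : (T0.card : ℝ) ≤ BB * (N : ℝ) ^ θ := by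
    have : (T0.card : ℝ) ≤ BB := by exact_mod_cast hT0
    refine this.trans ?_
    have : (0 : ℝ) ≤ BB := by positivity
    nlinarith
  calc _ ≤ BB * (N : ℝ) ^ θ + r * (BB * d * 2 ^ r * (C2 + 1) * (N : ℝ) ^ θ) := add_le_add h2 h1
    _ = _ := by ring


section series
variable {R : Type} [CommRing R]

lemma smod_iff (n : ℕ) (f g : PowerSeries R) :
    f ≡ g [SMOD ((Ideal.span {(PowerSeries.X : PowerSeries R)}) ^ n • ⊤ : Submodule (PowerSeries R) (PowerSeries R))] ↔
    ∀ m, m < n → PowerSeries.coeff m f = PowerSeries.coeff m g := by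
  rw [SModEq.sub_mem, smul_eq_mul, Ideal.mul_top, Ideal.span_singleton_pow, Ideal.mem_span_singleton,
    PowerSeries.X_pow_dvd_iff]
  simp [sub_eq_zero]

lemma powerSeries_adic : IsAdicComplete (Ideal.span {(PowerSeries.X : PowerSeries R)}) (PowerSeries R) where
  haus' x hx := by
    ext m
    have := (smod_iff (m + 1) x 0).1 (hx (m + 1)) m (Nat.lt_succ_self m)
    simpa using this
  prec' f hf := by
    refine ⟨PowerSeries.mk fun m => PowerSeries.coeff m (f (m + 1)), fun n => ?_⟩
    rw [smod_iff]
    intro m hm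
    rw [PowerSeries.coeff_mk]
    exact ((smod_iff (m + 1) _ _).1 (hf (show m + 1 ≤ n from hm)) m (Nat.lt_succ_self m)).symm

/-- The monic polynomial with coefficients `a`. -/
noncomputable def genPoly {n : ℕ} {S : Type} [CommRing S] (a : Fin n → S) : S[X] :=
  X ^ n + ∑ i : Fin n, C (a i) * X ^ (n - 1 - (i : ℕ))

lemma genPoly_aux {n : ℕ} {S : Type} [CommRing S] (a : Fin n → S) (hn : 0 < n) :
    (∑ i : Fin n, C (a i) * X ^ (n - 1 - (i : ℕ)) : S[X]).degree < (n : WithBot ℕ) := by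
  refine lt_of_le_of_lt (degree_sum_le _ _) ?_
  rw [Finset.sup_lt_iff (by simpa using WithBot.bot_lt_coe n)]
  intro i _
  refine (degree_C_mul_X_pow_le _ _).trans_lt ?_
  have : n - 1 - (i : ℕ) < n := by omega
  exact_mod_cast this

lemma genPoly_monic {n : ℕ} {S : Type} [CommRing S] (a : Fin n → S) (hn : 0 < n) :
    (genPoly a).Monic := monic_X_pow_add (genPoly_aux a hn)

lemma genPoly_natDegree {n : ℕ} {S : Type} [CommRing S] [Nontrivial S] (a : Fin n → S) (hn : 0 < n) :
    (genPoly a).natDegree = n := by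
  unfold genPoly
  rw [natDegree_add_eq_left_of_degree_lt, natDegree_X_pow]
  rw [degree_X_pow]
  exact genPoly_aux a hn

lemma genPoly_coeff {n : ℕ} {S : Type} [CommRing S] (a : Fin n → S) (i : Fin n) :
    (genPoly a).coeff (n - 1 - i) = a i := by
  unfold genPoly
  rw [coeff_add, coeff_X_pow, if_neg (by omega), zero_add, finsetSum_coeff,
    Finset.sum_eq_single i]
  · simp
  · intro j _ hj
    rw [coeff_C_mul_X_pow, if_neg]
    intro h
    apply hj
    ext
    omega
  · simp

lemma genPoly_map {n : ℕ} {S S' : Type} [CommRing S] [CommRing S'] (f : S →+* S') (a : Fin n → S) :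
    (genPoly a).map f = genPoly (fun i => f (a i)) := by
  unfold genPoly
  simp [Polynomial.map_sum]

lemma genPoly_eval {n : ℕ} {S : Type} [CommRing S] (a : Fin n → S) (x : S) :
    (genPoly a).eval x = x ^ n + ∑ i : Fin n, a i * x ^ (n - 1 - (i : ℕ)) := by
  unfold genPoly
  simp [eval_finsetSum]

lemma genPoly_vieta {n : ℕ} {S : Type} [CommRing S] (K : Type) [CommRing K] [Algebra K S] (a x : Fin n → S)
    (h : genPoly a = ∏ i, (X - C (x i))) (i : Fin n) :
    a i = (-1) ^ ((i : ℕ) + 1) * MvPolynomial.aeval x (MvPolynomial.esymm (Fin n) K (i + 1)) := by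
  have hn : 0 < n := i.pos
  rw [← genPoly_coeff a i, h]
  have h1 : (∏ i, (X - C (x i))) = ((Finset.univ.val.map x).map fun t => X - C t).prod := by
    rw [Multiset.map_map]; rfl
  rw [h1, Multiset.prod_X_sub_C_coeff _ (by simp; omega), MvPolynomial.aeval_esymm_eq_multiset_esymm]
  have h2 : Multiset.card (Finset.univ.val.map x) - (n - 1 - (i : ℕ)) = i + 1 := by
    have := i.2
    simp; omega
  rw [h2]

/-- Existence of power series roots. -/
lemma exists_series_roots [IsDomain R] [Algebra ℂ R] (k : ℕ) (A : Fin k → R) :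
    ∃ y : Fin (k + 1) → PowerSeries R, Function.Injective y ∧ ∀ j,
      y j ^ (k + 1) + ∑ i : Fin k, (PowerSeries.C (A i) * PowerSeries.X ^ ((i : ℕ) + 1)) * y j ^ (k - i) - 1 = 0 := by
  have hc := powerSeries_adic (R := R)
  let I := Ideal.span {(PowerSeries.X : PowerSeries R)}
  have hh : HenselianRing (PowerSeries R) I := inferInstance
  obtain ⟨ζ, hζ⟩ : ∃ ζ : ℂ, IsPrimitiveRoot ζ (k + 1) := ⟨_, Complex.isPrimitiveRoot_exp (k + 1) (by omega)⟩
  let a : Fin (k + 1) → PowerSeries R := fun i => 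
    if h : (i : ℕ) < k then PowerSeries.C (A ⟨i, h⟩) * PowerSeries.X ^ ((i : ℕ) + 1) else -1
  let g := genPoly a
  have hgm : g.Monic := genPoly_monic a (by omega)
  have hae : ∀ i : Fin k, a i.castSucc = PowerSeries.C (A i) * PowerSeries.X ^ ((i : ℕ) + 1) := by
    intro i; simp [a]
  have hal : a (Fin.last k) = -1 := by simp [a]
  have hg : ∀ y, g.eval y = y ^ (k + 1) + ∑ i : Fin k, (PowerSeries.C (A i) * PowerSeries.X ^ ((i : ℕ) + 1)) * y ^ (k - i) - 1 := by
    intro y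
    rw [genPoly_eval, Fin.sum_univ_castSucc, hal]
    simp only [hae, Fin.val_castSucc, Fin.val_last]
    simp
    ring
  have hgc : g.map (PowerSeries.constantCoeff (R := R)) = X ^ (k + 1) - 1 := by
    rw [genPoly_map]
    unfold genPoly
    rw [Fin.sum_univ_castSucc]
    simp only [hae, hal]
    simp [sub_eq_add_neg]
  have hmem : ∀ f : PowerSeries R, f ∈ I ↔ PowerSeries.constantCoeff f = 0 := by
    intro f
    rw [Ideal.mem_span_singleton, PowerSeries.X_dvd_iff]
  let b : ℕ → R := fun j => algebraMap ℂ R (ζ ^ j)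
  have hb : ∀ j, b j ^ (k + 1) = 1 := by
    intro j
    simp only [b]
    rw [← map_pow, ← pow_mul, mul_comm, pow_mul, hζ.pow_eq_one, one_pow, map_one]
  have hex : ∀ j : Fin (k + 1), ∃ y, g.IsRoot y ∧ y - PowerSeries.C (b j) ∈ I := by
    intro j
    apply hh.is_henselian g hgm
    · rw [hmem, ← Polynomial.eval₂_hom, ← Polynomial.eval_map, hgc]
      simp [hb]
    · have hu : IsUnit (g.derivative.eval (PowerSeries.C (b j))) := by
        rw [PowerSeries.isUnit_iff_constantCoeff, ← Polynomial.eval₂_hom, ← Polynomial.eval_map, ← derivative_map, hgc]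
        simp only [PowerSeries.constantCoeff_C, derivative_sub, derivative_X_pow, derivative_one]
        simp only [sub_zero, eval_mul, eval_pow, eval_X, map_natCast, eval_natCast]
        refine IsUnit.mul ?_ ?_
        · have : IsUnit (algebraMap ℂ R ((k + 1 : ℕ) : ℂ)) := by
            apply IsUnit.map
            rw [isUnit_iff_ne_zero]
            exact_mod_cast Nat.succ_ne_zero k
          simpa using this
        · exact (IsUnit.of_pow_eq_one (hb j) (by omega)).pow _
      exact hu.map _
  choose y hy1 hy2 using hex
  refine ⟨y, ?_, fun j => ?_⟩
  · intro i j hij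
    have h1 := (hmem _).1 (hy2 i)
    have h2 := (hmem _).1 (hy2 j)
    rw [map_sub, PowerSeries.constantCoeff_C, sub_eq_zero] at h1 h2
    rw [hij, h2] at h1
    have h3 : ζ ^ (j : ℕ) = ζ ^ (i : ℕ) := (algebraMap ℂ R).injective h1
    exact Fin.ext (hζ.pow_inj i.2 j.2 h3.symm)
  · rw [← hg]; exact hy1 j

end series


section laurent
variable {R S : Type} [CommRing R] [CommRing S]

/-- The series `t`. -/
noncomputable def tser (n : ℕ) (R : Type) [CommRing R] : HahnSeries ℤ R := HahnSeries.single (-(n : ℤ)) (-1)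

/-- Embedding of polynomials in `t`. -/
noncomputable def iota (n : ℕ) (R : Type) [CommRing R] : R[X] →+* HahnSeries ℤ R :=
  eval₂RingHom HahnSeries.C (tser n R)

lemma iota_C (n : ℕ) (r : R) : iota n R (C r) = HahnSeries.C r := by simp [iota]
lemma iota_X (n : ℕ) : iota n R X = tser n R := by simp [iota]

lemma iota_eq (n : ℕ) (q : R[X]) : iota n R q =
    ∑ j ∈ Finset.range (q.natDegree + 1), HahnSeries.single (-((n : ℤ) * j)) ((-1) ^ j * q.coeff j) := by
  simp only [iota, coe_eval₂RingHom, eval₂_eq_sum_range, tser, HahnSeries.single_pow]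
  refine Finset.sum_congr rfl fun j _ => ?_
  have h1 : (0 : ℤ) + j • (-(n : ℤ)) = -((n : ℤ) * j) := by simp [mul_comm]
  rw [HahnSeries.C_apply, HahnSeries.single_mul_single, mul_comm, h1]

lemma iota_coeff {n : ℕ} (hn : 0 < n) (q : R[X]) (j : ℕ) :
    (iota n R q).coeff (-((n : ℤ) * j)) = (-1) ^ j * q.coeff j := by
  rw [iota_eq, HahnSeries.coeff_sum, Finset.sum_eq_single j]
  · simp
  · intro i _ hij
    rw [HahnSeries.coeff_single_of_ne]
    intro h
    apply hij
    have h1 : (n : ℤ) * j = n * i := by linarith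
    have h2 : (j : ℤ) = i := mul_left_cancel₀ (by exact_mod_cast hn.ne') h1
    exact_mod_cast h2.symm
  · intro h
    rw [coeff_eq_zero_of_natDegree_lt (by simpa using h)]
    simp

lemma iota_coeff_ne {n : ℕ} (q : R[X]) (m : ℤ) (hm : ∀ j : ℕ, m ≠ -((n : ℤ) * j)) :
    (iota n R q).coeff m = 0 := by
  rw [iota_eq, HahnSeries.coeff_sum]
  exact Finset.sum_eq_zero fun j _ => HahnSeries.coeff_single_of_ne (hm j)

lemma iota_injective {n : ℕ} (hn : 0 < n) : Function.Injective (iota n R) := by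
  rw [injective_iff_map_eq_zero]
  intro q hq
  ext j
  have h := iota_coeff hn q j
  rw [hq] at h
  have h2 : (-1 : R) ^ j * ((-1) ^ j * q.coeff j) = 0 := by rw [← h]; simp
  rw [← mul_assoc, ← mul_pow] at h2
  simpa using h2

lemma iota_mem {n : ℕ} (hn : 0 < n) (F : HahnSeries ℤ R)
    (h : ∀ m : ℤ, (∀ j : ℕ, m ≠ -((n : ℤ) * j)) → F.coeff m = 0) : ∃ q, iota n R q = F := by
  obtain ⟨J, hJ⟩ : ∃ J : ℕ, ∀ j : ℕ, J ≤ j → F.coeff (-((n : ℤ) * j)) = 0 := by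
    refine ⟨(1 - F.order).toNat, fun j hj => HahnSeries.coeff_eq_zero_of_lt_order ?_⟩
    have : (1 - F.order) ≤ (j : ℤ) := by omega
    have h2 : (j : ℤ) ≤ n * j := by
      have : (1 : ℤ) ≤ n := by exact_mod_cast hn
      nlinarith
    linarith
  refine ⟨∑ j ∈ Finset.range J, C ((-1) ^ j * F.coeff (-((n : ℤ) * j))) * X ^ j, ?_⟩
  ext m
  by_cases hm : ∀ j : ℕ, m ≠ -((n : ℤ) * j)
  · rw [iota_coeff_ne _ _ hm, h _ hm]
  · push Not at hm
    obtain ⟨j, rfl⟩ := hm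
    rw [iota_coeff hn, finsetSum_coeff]
    simp only [coeff_C_mul_X_pow]
    rw [Finset.sum_ite_eq]
    split_ifs with hj
    · rw [← mul_assoc, ← mul_pow]; simp
    · rw [hJ j (by simpa using hj), mul_zero]

/-- Coefficientwise map. -/
noncomputable def mu (f : R →+* S) : HahnSeries ℤ R →+* HahnSeries ℤ S where
  toFun x := x.map f
  map_zero' := by ext; simp
  map_one' := by
    ext m
    simp only [HahnSeries.map_coeff, HahnSeries.coeff_one]
    split_ifs <;> simp
  map_add' x y := by ext; simp
  map_mul' x y := HahnSeries.map_mul (f : R →ₙ+* S)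

lemma mu_coeff (f : R →+* S) (x : HahnSeries ℤ R) (m : ℤ) : (mu f x).coeff m = f (x.coeff m) := rfl

lemma mu_C (f : R →+* S) (r : R) : mu f (HahnSeries.C r) = HahnSeries.C (f r) := by
  ext m
  rw [mu_coeff]
  simp only [HahnSeries.C_apply, HahnSeries.coeff_single]
  split_ifs <;> simp

lemma mu_tser (f : R →+* S) (n : ℕ) : mu f (tser n R) = tser n S := by
  ext m
  rw [mu_coeff]
  simp only [tser, HahnSeries.coeff_single]
  split_ifs <;> simp

lemma prod_eq_of_roots {D : Type} [CommRing D] [IsDomain D] {n : ℕ} (g : D[X]) (hg : g.Monic)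
    (hd : g.natDegree = n) (x : Fin n → D) (hx : Function.Injective x) (hr : ∀ i, g.IsRoot (x i)) :
    g = ∏ i, (X - C (x i)) := by
  have h1 : (∏ i, (X - C (x i))) = ((Finset.univ.val.map x).map fun t => X - C t).prod := by
    rw [Multiset.map_map]; rfl
  refine (eq_of_monic_of_dvd_of_natDegree_le (monic_prod_of_monic _ _ fun i _ => monic_X_sub_C _) hg ?_ ?_)
  · rw [h1, Multiset.prod_X_sub_C_dvd_iff_le_roots hg.ne_zero, Multiset.le_iff_subset]
    · intro a ha
      obtain ⟨i, _, rfl⟩ := Multiset.mem_map.1 ha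
      exact (mem_roots hg.ne_zero).2 (hr i)
    · exact (Multiset.nodup_map_iff_of_injective hx).2 Finset.univ.nodup
  · rw [natDegree_prod_of_monic _ _ fun i _ => monic_X_sub_C _]
    simp [hd]

lemma exists_laurent_roots [IsDomain R] [Algebra ℂ R] (k : ℕ) (A : Fin k → R) :
    ∃ x : Fin (k + 1) → HahnSeries ℤ R, Function.Injective x ∧
      genPoly (Fin.snoc (α := fun _ => HahnSeries ℤ R) (fun i => HahnSeries.C (A i)) (tser (k + 1) R)) = ∏ i, (X - C (x i)) := by
  obtain ⟨y, hy, hr⟩ := exists_series_roots k A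
  set v : HahnSeries ℤ R := HahnSeries.single (-1) 1
  set u : HahnSeries ℤ R := HahnSeries.single 1 1
  have huv : v * u = 1 := by simp [v, u]
  let φ := HahnSeries.ofPowerSeries ℤ R
  have hinj : Function.Injective fun j => v * φ (y j) := by
    intro i j hij
    apply hy
    apply HahnSeries.ofPowerSeries_injective (Γ := ℤ)
    have := congrArg (fun z => u * z) hij
    simpa only [← mul_assoc, mul_comm u v, huv, one_mul] using this
  refine ⟨fun j => v * φ (y j), hinj, ?_⟩
  refine prod_eq_of_roots _ (genPoly_monic _ (by omega)) (genPoly_natDegree _ (by omega)) _ hinj fun j => ?_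
  rw [IsRoot, genPoly_eval, Fin.sum_univ_castSucc]
  simp only [Fin.snoc_castSucc, Fin.snoc_last, Fin.val_castSucc, Fin.val_last]
  have h1 := congrArg φ (hr j)
  simp only [map_sub, map_add, map_pow, map_sum, map_mul, map_one, map_zero] at h1
  simp only [φ, HahnSeries.ofPowerSeries_C, HahnSeries.ofPowerSeries_X] at h1
  have h2 := congrArg (fun z => v ^ (k + 1) * z) h1
  simp only [mul_zero, mul_sub, mul_add, mul_one, Finset.mul_sum] at h2
  rw [← h2]
  have h3 : tser (k + 1) R = - v ^ (k + 1) := by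
    simp [v, tser, HahnSeries.single_pow]
  have h4 : ∀ i : Fin k, v ^ (k + 1) * (HahnSeries.C (A i) * u ^ ((i : ℕ) + 1) * (φ (y j)) ^ (k - (i : ℕ))) 
     = HahnSeries.C (A i) * (v * φ (y j)) ^ (k - (i : ℕ)) := by
    intro i
    have h5 : v ^ (k + 1) * u ^ ((i : ℕ) + 1) = v ^ (k - (i : ℕ)) := by
      have : k + 1 = (k - (i : ℕ)) + (i + 1) := by have := i.2; omega
      conv_lhs => rw [this, pow_add, mul_assoc, ← mul_pow, huv, one_pow, mul_one]
    rw [mul_pow, ← h5]; ring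
  rw [Finset.sum_congr rfl fun i _ => h4 i, h3]
  simp [mul_pow, sub_eq_add_neg, add_assoc, φ]

end laurent


section resolvent
variable {n : ℕ}

/-- Signed elementary symmetric polynomials. -/
noncomputable def sgnEsymm (n : ℕ) (K : Type) [CommRing K] (i : Fin n) : MvPolynomial (Fin n) K :=
  (-1) ^ ((i : ℕ) + 1) * MvPolynomial.esymm (Fin n) K (i + 1)

lemma exists_of_symmetric {K : Type} [CommRing K] (p : MvPolynomial (Fin n) K) (hp : p.IsSymmetric) :
    ∃ Q : MvPolynomial (Fin n) K, MvPolynomial.aeval (sgnEsymm n K) Q = p := by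
  obtain ⟨Q, hQ⟩ := MvPolynomial.esymmAlgHom_surjective (R := K) (σ := Fin n) (n := n) (by simp) ⟨p, hp⟩
  have h2 : MvPolynomial.aeval (fun i : Fin n => MvPolynomial.esymm (Fin n) K (i + 1)) Q = p := by
    rw [← MvPolynomial.esymmAlgHom_apply, hQ]
  refine ⟨MvPolynomial.aeval (fun i : Fin n => (-1) ^ ((i : ℕ) + 1) * MvPolynomial.X i) Q, ?_⟩
  rw [← h2, ← AlgHom.comp_apply]
  congr 1
  apply MvPolynomial.algHom_ext
  intro i
  simp only [AlgHom.comp_apply, MvPolynomial.aeval_X, map_mul, map_pow, map_neg, map_one, sgnEsymm]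
  rw [← mul_assoc, ← mul_pow]
  simp

lemma vieta' {S : Type} [CommRing S] (K : Type) [CommRing K] [Algebra K S] (a x : Fin n → S)
    (h : genPoly a = ∏ i, (X - C (x i))) (i : Fin n) :
    a i = MvPolynomial.aeval x (sgnEsymm n K i) := by
  rw [genPoly_vieta K a x h i, sgnEsymm]
  simp

variable (G : Subgroup (Equiv.Perm (Fin n)))

open Classical in
/-- The orbit sum. -/
noncomputable def Zp (σ : Equiv.Perm (Fin n)) : MvPolynomial (Fin n) ℤ :=
  ∑ τ : G, ∏ i, MvPolynomial.X (σ ((τ : Equiv.Perm (Fin n)) i)) ^ (i : ℕ)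

lemma rename_Zp (ρ σ : Equiv.Perm (Fin n)) : MvPolynomial.rename ρ (Zp G σ) = Zp G (ρ * σ) := by
  simp [Zp]

lemma Zp_mul (σ g : Equiv.Perm (Fin n)) (hg : g ∈ G) : Zp G (σ * g) = Zp G σ := by
  classical
  unfold Zp
  refine Fintype.sum_equiv (Equiv.mulLeft (⟨g, hg⟩ : G)) _ _ fun τ => ?_
  simp

lemma Zp_eq (σ σ' : Equiv.Perm (Fin n)) (h : (σ : Equiv.Perm (Fin n) ⧸ G) = σ') : Zp G σ = Zp G σ' := by
  rw [QuotientGroup.eq] at h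
  have := Zp_mul G σ _ h
  rw [← this]
  simp

/-- The exponent of the monomial attached to a permutation. -/
noncomputable def monExp (π : Equiv.Perm (Fin n)) : Fin n →₀ ℕ :=
  Finsupp.equivFunOnFinite.symm fun j => ((π⁻¹ j : Fin n) : ℕ)

lemma monExp_inj : Function.Injective (monExp (n := n)) := by
  intro π π' h
  have h2 := Finsupp.equivFunOnFinite.symm.injective h
  have h3 : π⁻¹ = π'⁻¹ := by
    ext j
    exact congrFun h2 j
  exact inv_injective h3

lemma prod_eq_monomial (π : Equiv.Perm (Fin n)) :
    (∏ i, MvPolynomial.X (π i) ^ (i : ℕ) : MvPolynomial (Fin n) ℤ) = MvPolynomial.monomial (monExp π) 1 := by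
  rw [MvPolynomial.monomial_eq, Finsupp.prod_fintype _ _ (by simp), map_one, one_mul,
    ← Equiv.prod_comp π fun j => (MvPolynomial.X j : MvPolynomial (Fin n) ℤ) ^ (monExp π j)]
  simp [monExp]

lemma Zp_inj (σ σ' : Equiv.Perm (Fin n)) (h : Zp G σ = Zp G σ') :
    (σ : Equiv.Perm (Fin n) ⧸ G) = σ' := by
  classical
  have key : ∀ s : Equiv.Perm (Fin n), (Zp G s).coeff (monExp σ') =
      ∑ τ : G, if s * (τ : Equiv.Perm (Fin n)) = σ' then (1 : ℤ) else 0 := by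
    intro s
    unfold Zp
    rw [MvPolynomial.coeff_sum]
    refine Finset.sum_congr (by congr!) fun τ _ => ?_
    have := prod_eq_monomial (s * (τ : Equiv.Perm (Fin n)))
    simp only [Equiv.Perm.mul_apply] at this
    rw [this, MvPolynomial.coeff_monomial]
    simp only [monExp_inj.eq_iff]
  have h1 : (Zp G σ').coeff (monExp σ') = 1 := by
    rw [key, Finset.sum_eq_single 1]
    · simp
    · intro b _ hb
      rw [if_neg]
      simpa using hb
    · simp
  rw [← h, key] at h1
  obtain ⟨τ, _, hτ⟩ := Finset.exists_ne_zero_of_sum_ne_zero (by rw [h1]; exact one_ne_zero)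
  have h2 : σ * (τ : Equiv.Perm (Fin n)) = σ' := by
    by_contra h; exact hτ (if_neg h)
  rw [QuotientGroup.eq, ← h2]
  simp

/-- The conjugates of the orbit sum. -/
noncomputable def Zq (q : Equiv.Perm (Fin n) ⧸ G) : MvPolynomial (Fin n) ℤ := Zp G q.out

lemma Zq_mk (σ : Equiv.Perm (Fin n)) : Zq G (σ : Equiv.Perm (Fin n) ⧸ G) = Zp G σ :=
  Zp_eq G _ _ (QuotientGroup.out_eq' _)

lemma Zq_inj : Function.Injective (Zq G) := by
  intro q q' h
  have := Zp_inj G _ _ h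
  rwa [QuotientGroup.out_eq', QuotientGroup.out_eq'] at this

lemma rename_Zq (ρ : Equiv.Perm (Fin n)) (q : Equiv.Perm (Fin n) ⧸ G) :
    MvPolynomial.rename ρ (Zq G q) = Zq G (ρ • q) := by
  induction q using QuotientGroup.induction_on with
  | H σ =>
    rw [Zq_mk, rename_Zp, ← Zq_mk]
    rfl

noncomputable instance cosetFintype : Fintype (Equiv.Perm (Fin n) ⧸ G) := Fintype.ofFinite _

theorem exists_resolvent : ∃ Ψ : (MvPolynomial (Fin n) ℤ)[X], Ψ.Monic ∧ Ψ.natDegree = G.index ∧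
    ∀ (S : Type) [CommRing S] (x a : Fin n → S), genPoly a = ∏ i, (X - C (x i)) →
      Ψ.map (MvPolynomial.aeval a : MvPolynomial (Fin n) ℤ →ₐ[ℤ] S).toRingHom =
        ∏ q, (X - C (MvPolynomial.aeval x (Zq G q))) := by
  let Q : (MvPolynomial (Fin n) ℤ)[X] := ∏ q, (X - C (Zq G q))
  have hQm : Q.Monic := monic_prod_of_monic _ _ fun i _ => monic_X_sub_C _
  have hQd : Q.natDegree = G.index := by
    rw [natDegree_prod_of_monic _ _ fun i _ => monic_X_sub_C _]
    simp [Subgroup.index]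
  have hsym : ∀ l, (Q.coeff l).IsSymmetric := by
    intro l ρ
    have h1 : Q.map (MvPolynomial.rename ρ : MvPolynomial (Fin n) ℤ →ₐ[ℤ] _).toRingHom = Q := by
      simp only [Q, Polynomial.map_prod, Polynomial.map_sub, Polynomial.map_X, Polynomial.map_C]
      refine Fintype.prod_equiv (MulAction.toPerm ρ) _ _ fun q => ?_
      have := rename_Zq G ρ q
      simp [this]
    conv_rhs => rw [← h1]
    rw [coeff_map]; rfl
  choose c hc using fun l => exists_of_symmetric _ (hsym l)
  have hdeg : (∑ l ∈ Finset.range G.index, C (c l) * X ^ l).degree < (G.index : WithBot ℕ) := by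
    refine lt_of_le_of_lt (degree_sum_le _ _) ?_
    rw [Finset.sup_lt_iff (WithBot.bot_lt_coe _)]
    intro i hi
    refine (degree_C_mul_X_pow_le _ _).trans_lt ?_
    exact_mod_cast Finset.mem_range.1 hi
  refine ⟨X ^ G.index + ∑ l ∈ Finset.range G.index, C (c l) * X ^ l, monic_X_pow_add hdeg, ?_, ?_⟩
  · rw [natDegree_add_eq_left_of_degree_lt, natDegree_X_pow]
    rw [degree_X_pow]; exact hdeg
  · intro S _ x a h
    have h1 : ∀ p : MvPolynomial (Fin n) ℤ, MvPolynomial.aeval a p = MvPolynomial.aeval x (MvPolynomial.aeval (sgnEsymm n ℤ) p) := by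
      intro p
      rw [← AlgHom.comp_apply]
      congr 1
      apply MvPolynomial.algHom_ext
      intro i
      simp only [AlgHom.comp_apply, MvPolynomial.aeval_X]
      exact vieta' ℤ a x h i
    have h2 : Q.map (MvPolynomial.aeval x : MvPolynomial (Fin n) ℤ →ₐ[ℤ] S).toRingHom = ∏ q, (X - C (MvPolynomial.aeval x (Zq G q))) := by
      simp [Q, Polynomial.map_prod]
    rw [← h2, hQm.as_sum, hQd]
    simp only [Polynomial.map_add, Polynomial.map_sum, Polynomial.map_mul, Polynomial.map_pow, Polynomial.map_X,
      Polynomial.map_C, AlgHom.toRingHom_eq_coe, RingHom.coe_coe, h1, hc]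

end resolvent


section generic
variable (k : ℕ)

/-- The specialisation of the coefficients. -/
noncomputable def theta : MvPolynomial (Fin (k + 1)) ℂ →ₐ[ℂ] (MvPolynomial (Fin k) ℂ)[X] :=
  MvPolynomial.aeval (Fin.snoc (α := fun _ => (MvPolynomial (Fin k) ℂ)[X]) (fun i => C (MvPolynomial.X i)) X)

/-- The inverse of `theta`. -/
noncomputable def thetaInv : (MvPolynomial (Fin k) ℂ)[X] →+* MvPolynomial (Fin (k + 1)) ℂ :=
  eval₂RingHom (MvPolynomial.aeval (fun i : Fin k => (MvPolynomial.X i.castSucc : MvPolynomial (Fin (k + 1)) ℂ)) :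
    MvPolynomial (Fin k) ℂ →ₐ[ℂ] MvPolynomial (Fin (k + 1)) ℂ).toRingHom (MvPolynomial.X (Fin.last k))

lemma theta_castSucc (i : Fin k) : theta k (MvPolynomial.X i.castSucc) = C (MvPolynomial.X i) := by
  simp only [theta, MvPolynomial.aeval_X, Fin.snoc_castSucc]

lemma theta_last : theta k (MvPolynomial.X (Fin.last k)) = X := by
  simp only [theta, MvPolynomial.aeval_X, Fin.snoc_last]

lemma theta_C (c : ℂ) : theta k (MvPolynomial.C c) = C (MvPolynomial.C c) := by
  simp only [theta, MvPolynomial.aeval_C]; rfl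

lemma thetaInv_theta (p : MvPolynomial (Fin (k + 1)) ℂ) : thetaInv k (theta k p) = p := by
  have : (thetaInv k).comp (theta k).toRingHom = RingHom.id _ := by
    apply MvPolynomial.ringHom_ext
    · intro r
      simp [thetaInv]
    · intro i
      refine Fin.lastCases ?_ (fun i => ?_) i
      · simp [theta_last, thetaInv]
      · simp [theta_castSucc, thetaInv]
  exact congrArg (fun f => f p) this

lemma theta_thetaInv (q : (MvPolynomial (Fin k) ℂ)[X]) : theta k (thetaInv k q) = q := by
  have : (theta k).toRingHom.comp (thetaInv k) = RingHom.id _ := by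
    apply Polynomial.ringHom_ext'
    · apply MvPolynomial.ringHom_ext
      · intro r
        simp [thetaInv]
      · intro i
        simp [theta_castSucc, thetaInv]
    · simp [theta_last, thetaInv]
  exact congrArg (fun f => f q) this

variable {k}

lemma beta_theta (x : Fin (k + 1) → HahnSeries ℤ (MvPolynomial (Fin k) ℂ))
  (hx : genPoly (Fin.snoc (α := fun _ => HahnSeries ℤ (MvPolynomial (Fin k) ℂ)) (fun i => HahnSeries.C (MvPolynomial.X i)) (tser (k + 1) _)) = ∏ i, (X - C (x i))) (Q : MvPolynomial (Fin (k + 1)) ℂ) :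
    MvPolynomial.aeval x (MvPolynomial.aeval (sgnEsymm (k + 1) ℂ) Q) = iota (k + 1) _ (theta k Q) := by
  have : (MvPolynomial.aeval x : _ →ₐ[ℂ] _).toRingHom.comp (MvPolynomial.aeval (sgnEsymm (k + 1) ℂ) : _ →ₐ[ℂ] _).toRingHom
     = (iota (k + 1) _).comp (theta k).toRingHom := by
    apply MvPolynomial.ringHom_ext
    · intro r
      simp only [RingHom.comp_apply, AlgHom.toRingHom_eq_coe, RingHom.coe_coe, theta_C, iota_C]
      rw [MvPolynomial.aeval_C, AlgHom.commutes, HahnSeries.algebraMap_apply', PowerSeries.algebraMap_apply,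
        HahnSeries.ofPowerSeries_C]
      rfl
    · intro i
      simp only [RingHom.comp_apply, AlgHom.toRingHom_eq_coe, RingHom.coe_coe]
      rw [MvPolynomial.aeval_X, ← vieta' ℂ _ x hx]
      refine Fin.lastCases ?_ (fun i => ?_) i
      · rw [theta_last, iota_X, Fin.snoc_last]
      · rw [theta_castSucc, iota_C, Fin.snoc_castSucc]
  exact congrArg (fun f => f Q) this

lemma beta_inj (x : Fin (k + 1) → HahnSeries ℤ (MvPolynomial (Fin k) ℂ))
  (hx : genPoly (Fin.snoc (α := fun _ => HahnSeries ℤ (MvPolynomial (Fin k) ℂ)) (fun i => HahnSeries.C (MvPolynomial.X i)) (tser (k + 1) _)) = ∏ i, (X - C (x i))) : Function.Injective (MvPolynomial.aeval (R := ℂ) x) := by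
  rw [injective_iff_map_eq_zero]
  intro p hp
  by_contra hne
  let N : MvPolynomial (Fin (k + 1)) ℂ := ∏ σ : Equiv.Perm (Fin (k + 1)), MvPolynomial.rename σ p
  have hN0 : N ≠ 0 := by
    rw [Finset.prod_ne_zero_iff]
    intro σ _ h
    exact hne (MvPolynomial.rename_injective σ σ.injective (by rw [h, map_zero]))
  have hNs : N.IsSymmetric := by
    intro ρ
    simp only [N, map_prod, MvPolynomial.rename_rename]
    exact Fintype.prod_equiv (Equiv.mulLeft ρ) _ _ fun σ => rfl
  have hN : MvPolynomial.aeval x N = 0 := by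
    simp only [N, map_prod]
    refine Finset.prod_eq_zero (Finset.mem_univ 1) ?_
    have : (⇑(1 : Equiv.Perm (Fin (k + 1)))) = id := rfl
    rw [this, MvPolynomial.rename_id_apply, hp]
  obtain ⟨Q, hQ⟩ := exists_of_symmetric N hNs
  rw [← hQ, beta_theta x hx] at hN
  have h1 := iota_injective (by omega) (hN.trans (map_zero _).symm)
  have h2 := thetaInv_theta k Q
  rw [h1, map_zero] at h2
  rw [← h2, map_zero] at hQ
  exact hN0 hQ.symm

lemma isSymmetric_aeval {n : ℕ} (Q : MvPolynomial (Fin n) ℂ) :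
    (MvPolynomial.aeval (sgnEsymm n ℂ) Q).IsSymmetric := by
  intro ρ
  rw [← AlgHom.comp_apply]
  congr 1
  apply MvPolynomial.algHom_ext
  intro i
  simp [sgnEsymm, MvPolynomial.rename_esymm]

theorem generic_claim (x : Fin (k + 1) → HahnSeries ℤ (MvPolynomial (Fin k) ℂ))
  (hx : genPoly (Fin.snoc (α := fun _ => HahnSeries ℤ (MvPolynomial (Fin k) ℂ)) (fun i => HahnSeries.C (MvPolynomial.X i)) (tser (k + 1) _)) = ∏ i, (X - C (x i))) (G : Subgroup (Equiv.Perm (Fin (k + 1)))) (I : Finset (Equiv.Perm (Fin (k + 1)) ⧸ G))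
    (hI : I.Nonempty) (hI2 : I ≠ Finset.univ) : ∃ (l : ℕ) (m : ℤ), (∀ j : ℕ, m ≠ -(((k + 1 : ℕ) : ℤ) * j)) ∧
      ((∏ q ∈ I, (X - C (MvPolynomial.aeval x (Zq G q)))).coeff l).coeff m ≠ 0 := by
  by_contra! hcon
  let Zc : (Equiv.Perm (Fin (k + 1)) ⧸ G) → MvPolynomial (Fin (k + 1)) ℂ := fun q => MvPolynomial.map (Int.castRingHom ℂ) (Zq G q)
  have hZc : Function.Injective Zc := (MvPolynomial.map_injective _ Int.cast_injective).comp (Zq_inj G)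
  have hZx : ∀ q, MvPolynomial.aeval x (Zc q) = MvPolynomial.aeval x (Zq G q) := by
    intro q
    simp only [Zc]
    rw [MvPolynomial.aeval_def, MvPolynomial.aeval_def, MvPolynomial.eval₂_map]
    congr 1
    exact Subsingleton.elim _ _
  have hZr : ∀ (ρ : Equiv.Perm (Fin (k + 1))) q, MvPolynomial.rename ρ (Zc q) = Zc (ρ • q) := by
    intro ρ q
    simp only [Zc]
    rw [← rename_Zq, MvPolynomial.map_rename]
  let W : (MvPolynomial (Fin (k + 1)) ℂ)[X] := ∏ q ∈ I, (X - C (Zc q))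
  have hW : W.map (MvPolynomial.aeval (R := ℂ) x).toRingHom = ∏ q ∈ I, (X - C (MvPolynomial.aeval x (Zq G q))) := by
    simp only [W, Polynomial.map_prod, Polynomial.map_sub, Polynomial.map_X, Polynomial.map_C, AlgHom.toRingHom_eq_coe, RingHom.coe_coe, hZx]
  have hsym : ∀ l, (W.coeff l).IsSymmetric := by
    intro l
    obtain ⟨q, hq⟩ := iota_mem (by omega) _ (hcon l)
    rw [← hW, coeff_map, ← theta_thetaInv k q, ← beta_theta x hx] at hq
    have := beta_inj x hx hq
    rw [← this]
    exact isSymmetric_aeval _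
  obtain ⟨q0, hq0⟩ := hI
  apply hI2
  rw [Finset.eq_univ_iff_forall]
  intro q1
  obtain ⟨ρ, rfl⟩ := MulAction.exists_smul_eq (Equiv.Perm (Fin (k + 1))) q0 q1
  have hmap : W.map (MvPolynomial.rename (R := ℂ) ρ).toRingHom = W := by
    ext1 l
    rw [coeff_map]
    exact hsym l ρ
  have hev : W.eval (Zc q0) = 0 := by
    simp only [W, eval_prod]
    exact Finset.prod_eq_zero hq0 (by simp)
  have hev2 : W.eval (Zc (ρ • q0)) = 0 := by
    have h3 : (MvPolynomial.rename (R := ℂ) ρ).toRingHom (Zc q0) = Zc (ρ • q0) := hZr ρ q0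
    rw [← h3, ← hmap, eval_map, eval₂_hom, hev, map_zero]
  simp only [W, eval_prod] at hev2
  obtain ⟨q, hq, h4⟩ := Finset.prod_eq_zero_iff.1 hev2
  have h5 : Zc (ρ • q0) = Zc q := by simpa [sub_eq_zero] using h4
  rwa [hZc h5]

end generic


section irred
variable {k : ℕ}

/-- Specialisation of all coefficients but the last. -/
noncomputable def specHom (a : Fin k → ℤ) : MvPolynomial (Fin (k + 1)) ℤ →+* ℤ[X] :=
  (MvPolynomial.aeval (Fin.snoc (α := fun _ => ℤ[X]) (fun i => C (a i)) X) : MvPolynomial (Fin (k + 1)) ℤ →ₐ[ℤ] ℤ[X]).toRingHom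

lemma factor_split {D : Type} [CommRing D] [IsDomain D] {ι : Type} [Fintype ι] [DecidableEq ι] (z : ι → D)
    (A B : D[X]) (hA : A.Monic) (h : A * B = ∏ q, (X - C (z q))) (hA0 : A.natDegree ≠ 0)
    (hB0 : B.natDegree ≠ 0) :
    ∃ I : Finset ι, I.Nonempty ∧ I ≠ Finset.univ ∧ A = ∏ q ∈ I, (X - C (z q)) := by
  obtain ⟨t, u, b, c, htu, hdis, hbc, h1, h2⟩ := mul_eq_mul_prime_prod (x := A) (y := B) (a := 1) (s := Finset.univ)
    (p := fun q => X - C (z q)) (fun i _ => prime_X_sub_C _) (by rw [one_mul, h])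
  have hm : ∀ s : Finset ι, (∏ q ∈ s, (X - C (z q))).Monic := fun s => monic_prod_of_monic _ _ fun i _ => monic_X_sub_C _
  have hb : b = 1 := by
    apply Monic.eq_one_of_isUnit
    · exact (hm t).of_mul_monic_right (h1 ▸ hA)
    · exact IsUnit.of_mul_eq_one _ hbc.symm
  have hc : c = 1 := by
    rw [hb, one_mul] at hbc
    exact hbc.symm
  rw [hb, one_mul] at h1
  rw [hc, one_mul] at h2
  refine ⟨t, ?_, ?_, h1⟩
  · rw [Finset.nonempty_iff_ne_empty]
    rintro rfl
    apply hA0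
    rw [h1]; simp
  · rintro rfl
    apply hB0
    rw [h2]
    have : u = ∅ := by
      rw [disjoint_comm] at hdis
      exact Finset.disjoint_self_iff_empty _ |>.1 (hdis.mono_right (Finset.subset_univ _))
    rw [this]; simp

theorem exists_good (G : Subgroup (Equiv.Perm (Fin (k + 1)))) (Ψ : (MvPolynomial (Fin (k + 1)) ℤ)[X]) (hm : Ψ.Monic)
    (hd : Ψ.natDegree = G.index)
    (hΨ : ∀ (S : Type) [CommRing S] (x a : Fin (k + 1) → S), genPoly a = ∏ i, (X - C (x i)) →
      Ψ.map (MvPolynomial.aeval a : MvPolynomial (Fin (k + 1)) ℤ →ₐ[ℤ] S).toRingHom =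
        ∏ q, (X - C (MvPolynomial.aeval x (Zq G q)))) :
    ∃ P : MvPolynomial (Fin k) ℂ, P ≠ 0 ∧ ∀ a : Fin k → ℤ, MvPolynomial.eval (fun i => (a i : ℂ)) P ≠ 0 →
      Irreducible (ratMap (Ψ.map (specHom a))) := by
  classical
  obtain ⟨x, -, hx⟩ := exists_laurent_roots (R := MvPolynomial (Fin k) ℂ) k MvPolynomial.X
  have hgen := fun (I : Finset (Equiv.Perm (Fin (k + 1)) ⧸ G)) hI hI2 => generic_claim x hx G I hI hI2
  choose! l m hlm hne using hgen
  let pr := (Finset.univ : Finset (Finset (Equiv.Perm (Fin (k + 1)) ⧸ G))).filter fun I => I.Nonempty ∧ I ≠ Finset.univ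
  let PI : Finset (Equiv.Perm (Fin (k + 1)) ⧸ G) → MvPolynomial (Fin k) ℂ := fun I =>
    ((∏ q ∈ I, (X - C (MvPolynomial.aeval x (Zq G q)))).coeff (l I)).coeff (m I)
  refine ⟨∏ I ∈ pr, PI I, ?_, ?_⟩
  · rw [Finset.prod_ne_zero_iff]
    intro I hI
    have := (Finset.mem_filter.1 hI).2
    exact hne I this.1 this.2
  intro a ha
  rw [map_prod, Finset.prod_ne_zero_iff] at ha
  let ev : MvPolynomial (Fin k) ℂ →+* ℂ := MvPolynomial.eval (fun i => (a i : ℂ))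
  let x' := fun j => mu ev (x j)
  have hx' : genPoly (Fin.snoc (α := fun _ => HahnSeries ℤ ℂ) (fun i => HahnSeries.C (a i : ℂ)) (tser (k + 1) ℂ)) = ∏ i, (X - C (x' i)) := by
    have := congrArg (Polynomial.map (mu ev)) hx
    rw [genPoly_map] at this
    simp only [Polynomial.map_prod, Polynomial.map_sub, Polynomial.map_X, Polynomial.map_C] at this
    rw [← this]
    congr 1
    funext i
    refine Fin.lastCases ?_ (fun i => ?_) i
    · simp only [Fin.snoc_last, mu_tser]
    · simp only [Fin.snoc_castSucc, mu_C, ev, MvPolynomial.eval_X]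
  have hsplit := hΨ _ x' _ hx'
  let j : ℚ[X] →+* HahnSeries ℤ ℂ := (iota (k + 1) ℂ).comp (mapRingHom (algebraMap ℚ ℂ))
  have hjm := Eq.trans (a := (ratMap (Ψ.map (specHom a))).map j) (by
    rw [ratMap, Polynomial.map_map, Polynomial.map_map]
    congr 1
    apply MvPolynomial.ringHom_ext
    · intro r
      simp [specHom]
    · intro i
      refine Fin.lastCases ?_ (fun i => ?_) i
      · simp [specHom, j, iota_X]
      · simp [specHom, j, ← HahnSeries.C_apply]) hsplit
  have hrm : (ratMap (Ψ.map (specHom a))).Monic := (hm.map _).map _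
  rw [hrm.irreducible_iff_natDegree]
  constructor
  · intro h
    have h1 : (ratMap (Ψ.map (specHom a))).natDegree = G.index := by
      rw [ratMap, (hm.map _).natDegree_map, hm.natDegree_map, hd]
    rw [h, natDegree_one] at h1
    exact Subgroup.index_ne_zero_of_finite h1.symm
  · intro A B hA hB hAB
    by_contra! hcon
    rw [← hAB, Polynomial.map_mul] at hjm
    obtain ⟨I, hI1, hI2, hI⟩ := factor_split _ _ _ (hA.map j) hjm (by rw [hA.natDegree_map]; exact hcon.1)
      (by rw [hB.natDegree_map]; exact hcon.2)
    apply ha I (by simp [pr, hI1, hI2])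
    have h1 : A.map j = (∏ q ∈ I, (X - C (MvPolynomial.aeval x (Zq G q)))).map (mu ev) := by
      rw [hI]
      simp only [Polynomial.map_prod, Polynomial.map_sub, Polynomial.map_X, Polynomial.map_C]
      refine Finset.prod_congr rfl fun q _ => ?_
      congr 2
      simp only [MvPolynomial.aeval_def, MvPolynomial.hom_eval₂]
      congr 1
      exact Subsingleton.elim _ _
    have h2 := congrArg (fun W => (W.coeff (l I)).coeff (m I)) h1
    simp only [coeff_map, mu_coeff] at h2
    change _ = MvPolynomial.eval (fun i => (a i : ℂ)) (PI I) at h2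
    rw [← h2]
    exact iota_coeff_ne _ _ (hlm I hI1 hI2)

end irred


lemma gal_fixed {F : Type} [Field F] [CharZero F] (f : F[X]) (z : f.SplittingField) (h : ∀ g : f.Gal, g z = z) :
    ∃ r : F, algebraMap F f.SplittingField r = z := by
  have hnor := Normal.of_isSplittingField (F := F) (E := f.SplittingField) f
  have hgal : IsGalois F f.SplittingField := IsGalois.mk
  have := (IsGalois.mem_bot_iff_fixed (F := F) (E := f.SplittingField) z).2 h
  rwa [IntermediateField.mem_bot] at this

theorem gal_root {n : ℕ} (hn : 0 < n) (G : Subgroup (Equiv.Perm (Fin n))) (Ψ : (MvPolynomial (Fin n) ℤ)[X])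
    (hΨ : ∀ (S : Type) [CommRing S] (x a : Fin n → S), genPoly a = ∏ i, (X - C (x i)) →
      Ψ.map (MvPolynomial.aeval a : MvPolynomial (Fin n) ℤ →ₐ[ℤ] S).toRingHom =
        ∏ q, (X - C (MvPolynomial.aeval x (Zq G q))))
    (a : Fin n → ℤ) (f : ℚ[X]) (hf : f = genPoly fun i => (a i : ℚ)) (h : HasGaloisGroup n f G) :
    ∃ z : ℤ, (Ψ.map (MvPolynomial.aeval a : MvPolynomial (Fin n) ℤ →ₐ[ℤ] ℤ).toRingHom).eval z = 0 := by
  obtain ⟨e, he⟩ := h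
  let K := f.SplittingField
  let x : Fin n → K := fun i => (e i : K)
  have hxinj : Function.Injective x := Subtype.val_injective.comp e.injective
  have hmapK : f.map (algebraMap ℚ K) = genPoly fun i => (a i : K) := by
    have h0 := congrArg (Polynomial.map (algebraMap ℚ K)) hf
    rw [genPoly_map] at h0
    simpa using h0
  have hroot : ∀ i, (genPoly fun i => (a i : K)).IsRoot (x i) := by
    intro i
    have := (mem_rootSet.1 (e i).2).2
    rw [IsRoot, ← hmapK, eval_map_algebraMap]
    exact this
  have hprod := prod_eq_of_roots _ (genPoly_monic (fun i => (a i : K)) hn) (genPoly_natDegree _ hn) x hxinj hroot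
  have hΨK := hΨ K x _ hprod
  let z : K := MvPolynomial.aeval x (Zp G 1)
  have hfix : ∀ g : f.Gal, g z = z := by
    intro g
    let σ : Equiv.Perm (Fin n) := (e.trans (MulAction.toPerm g)).trans e.symm
    have hσ : ∀ i, g • (e i) = e (σ i) := by
      intro i
      simp [σ]
    have hσG : σ ∈ G := (he σ).2 ⟨g, hσ⟩
    have hgx : ∀ i, g (x i) = x (σ i) := by
      intro i
      have := congrArg Subtype.val (hσ i)
      simp only [x]
      rw [← this]
      rfl
    have h1 : g z = MvPolynomial.aeval x (MvPolynomial.rename σ (Zp G 1)) := by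
      rw [MvPolynomial.aeval_rename]
      simp only [z]
      have h2 : x ∘ σ = fun i => g (x i) := by funext i; simp [hgx]
      rw [h2, MvPolynomial.aeval_def, MvPolynomial.aeval_def]
      rw [show g (MvPolynomial.eval₂ (algebraMap ℤ K) x (Zp G 1)) = (g : K →+* K) (MvPolynomial.eval₂ (algebraMap ℤ K) x (Zp G 1)) from rfl,
        MvPolynomial.hom_eval₂]
      congr 1
      exact Subsingleton.elim _ _
    rw [h1, rename_Zp, mul_one, ← one_mul σ, Zp_mul G 1 σ hσG]
  obtain ⟨r, hr0⟩ := gal_fixed f z hfix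
  have hr : algebraMap ℚ K r = z := by
    rw [← hr0, eq_ratCast, eq_ratCast]
  have hzint : IsIntegral ℤ z := by
    have hx : ∀ i, x i ∈ integralClosure ℤ K := by
      intro i
      refine ⟨genPoly a, genPoly_monic a hn, ?_⟩
      have h1 := hroot i
      rw [IsRoot] at h1
      rw [← eval_map, genPoly_map]
      simpa using h1
    have hz : z ∈ integralClosure ℤ K := by
      simp only [z, Zp, map_sum, map_prod, map_pow, MvPolynomial.aeval_X]
      exact Subalgebra.sum_mem _ fun τ _ => Subalgebra.prod_mem _ fun i _ => Subalgebra.pow_mem _ (hx _) _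
    exact hz
  have hrint : IsIntegral ℤ r := by
    rw [← hr] at hzint
    exact (isIntegral_algebraMap_iff (algebraMap ℚ K).injective).1 hzint
  obtain ⟨m, hm⟩ := IsIntegrallyClosed.isIntegral_iff.1 hrint
  refine ⟨m, ?_⟩
  have hmz : (m : K) = z := by
    rw [← hr, ← hm]; simp
  apply (Int.cast_injective : Function.Injective (Int.cast : ℤ → K))
  have h3 : Ψ.map (MvPolynomial.aeval (fun i => (a i : K)) : MvPolynomial (Fin n) ℤ →ₐ[ℤ] K).toRingHom =
    (Ψ.map (MvPolynomial.aeval a : MvPolynomial (Fin n) ℤ →ₐ[ℤ] ℤ).toRingHom).map (Int.castRingHom K) := by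
    rw [Polynomial.map_map]
    congr 1
    apply MvPolynomial.ringHom_ext <;> intro i <;> simp
  have h4 := congrArg (Polynomial.eval (m : K)) (h3.symm.trans hΨK)
  have h5 : (m : K) = Int.castRingHom K m := rfl
  rw [h5, eval_map, eval₂_hom, ← h5, eval_prod, Finset.prod_eq_zero (Finset.mem_univ (((1 : Equiv.Perm (Fin n)) : Equiv.Perm (Fin n) ⧸ G)))] at h4
  · simpa using h4
  · rw [Zq_mk, hmz]
    simp only [eval_sub, eval_X, eval_C, z]
    rw [sub_eq_zero, MvPolynomial.aeval_def, MvPolynomial.aeval_def]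
    congr 1


section bounds

lemma KN_mono (K K' N : ℕ) (hN : 1 ≤ N) (h : K ≤ K') : (K : ℤ) * (N : ℤ) ^ K ≤ K' * (N : ℤ) ^ K' := by
  have h1 : K * N ^ K ≤ K' * N ^ K' := Nat.mul_le_mul h (Nat.pow_le_pow_right hN h)
  exact_mod_cast h1

lemma eval_bound {n : ℕ} (c : MvPolynomial (Fin n) ℤ) : ∃ K : ℕ, ∀ N : ℕ, 1 ≤ N → ∀ a : Fin n → ℤ, (∀ i, |a i| ≤ N) →
    |MvPolynomial.aeval a c| ≤ K * (N : ℤ) ^ K := by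
  induction c using MvPolynomial.induction_on with
  | C r =>
    refine ⟨r.natAbs, fun N hN a ha => ?_⟩
    have h0 : MvPolynomial.aeval a (MvPolynomial.C r : MvPolynomial (Fin n) ℤ) = r := by simp
    rw [h0, Int.natCast_natAbs]
    have : (1 : ℤ) ≤ (N : ℤ) ^ r.natAbs := one_le_pow₀ (by exact_mod_cast hN)
    nlinarith [abs_nonneg r]
  | add p q hp hq =>
    obtain ⟨K1, h1⟩ := hp
    obtain ⟨K2, h2⟩ := hq
    refine ⟨K1 + K2, fun N hN a ha => ?_⟩
    rw [map_add]
    refine (abs_add_le _ _).trans ((add_le_add (h1 N hN a ha) (h2 N hN a ha)).trans ?_)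
    have h3 : K1 * N ^ K1 + K2 * N ^ K2 ≤ (K1 + K2) * N ^ (K1 + K2) := by
      rw [add_mul]
      gcongr <;> omega
    exact_mod_cast h3
  | mul_X p i hp =>
    obtain ⟨K1, h1⟩ := hp
    refine ⟨K1 + 1, fun N hN a ha => ?_⟩
    rw [map_mul, MvPolynomial.aeval_X, abs_mul]
    refine (mul_le_mul (h1 N hN a ha) (ha i) (abs_nonneg _) (by positivity)).trans ?_
    have h3 : K1 * N ^ K1 * N ≤ (K1 + 1) * N ^ (K1 + 1) := by
      rw [pow_succ, mul_assoc]
      gcongr; omega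
    exact_mod_cast h3

variable {k : ℕ}

lemma specHom_eval (a : Fin k → ℤ) (t : ℤ) (c : MvPolynomial (Fin (k + 1)) ℤ) :
    (specHom a c).eval t = MvPolynomial.aeval (Fin.snoc (α := fun _ => ℤ) a t) c := by
  have : (evalRingHom t).comp (specHom a) = (MvPolynomial.aeval (Fin.snoc (α := fun _ => ℤ) a t) : MvPolynomial (Fin (k + 1)) ℤ →ₐ[ℤ] ℤ).toRingHom := by
    apply MvPolynomial.ringHom_ext
    · intro r; simp
    · intro i
      refine Fin.lastCases ?_ (fun i => ?_) i <;> simp [specHom]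
  exact congrArg (fun f => f c) this

lemma specHom_degree (c : MvPolynomial (Fin (k + 1)) ℤ) : ∃ E : ℕ, ∀ a : Fin k → ℤ, (specHom a c).natDegree ≤ E := by
  induction c using MvPolynomial.induction_on with
  | C r => exact ⟨0, fun a => by simp [specHom]⟩
  | add p q hp hq =>
    obtain ⟨K1, h1⟩ := hp
    obtain ⟨K2, h2⟩ := hq
    refine ⟨max K1 K2, fun a => ?_⟩
    rw [map_add]
    exact (natDegree_add_le _ _).trans (max_le_max (h1 a) (h2 a))
  | mul_X p i hp =>
    obtain ⟨K1, h1⟩ := hp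
    refine ⟨K1 + 1, fun a => ?_⟩
    rw [map_mul]
    refine natDegree_mul_le.trans (add_le_add (h1 a) ?_)
    refine Fin.lastCases ?_ (fun i => ?_) i <;> simp [specHom]

lemma specHom_evalEval (a : Fin k → ℤ) (t z : ℤ) (Ψ : (MvPolynomial (Fin (k + 1)) ℤ)[X]) :
    evalEval t z (Ψ.map (specHom a)) =
      (Ψ.map (MvPolynomial.aeval (Fin.snoc (α := fun _ => ℤ) a t) : MvPolynomial (Fin (k + 1)) ℤ →ₐ[ℤ] ℤ).toRingHom).eval z := by
  rw [← map_evalRingHom_eval, Polynomial.map_map]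
  congr 2
  apply RingHom.ext
  intro c
  exact specHom_eval a t c

lemma uniform_bounds (Ψ : (MvPolynomial (Fin (k + 1)) ℤ)[X]) : ∃ E K : ℕ, ∀ a : Fin k → ℤ,
    (∀ l, ((Ψ.map (specHom a)).coeff l).natDegree ≤ E) ∧ ∀ N : ℕ, 1 ≤ N → (∀ i, |a i| ≤ N) →
     ∀ l, ∀ t : ℤ, |t| ≤ N → |((Ψ.map (specHom a)).coeff l).eval t| ≤ K * (N : ℤ) ^ K := by
  choose K hK using fun l => eval_bound (Ψ.coeff l)
  choose E hE using fun l => specHom_degree (Ψ.coeff l)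
  refine ⟨∑ l ∈ Finset.range (Ψ.natDegree + 1), E l, ∑ l ∈ Finset.range (Ψ.natDegree + 1), K l, fun a => ⟨fun l => ?_, ?_⟩⟩
  · rw [coeff_map]
    by_cases hl : l ∈ Finset.range (Ψ.natDegree + 1)
    · exact (hE l a).trans (Finset.single_le_sum (f := E) (fun _ _ => Nat.zero_le _) hl)
    · rw [coeff_eq_zero_of_natDegree_lt (by simpa using hl)]
      simp
  · intro N hN ha l t ht
    rw [coeff_map]
    by_cases hl : l ∈ Finset.range (Ψ.natDegree + 1)
    · rw [specHom_eval]
      refine (hK l N hN _ fun i => ?_).trans (KN_mono _ _ _ hN (Finset.single_le_sum (f := K) (fun _ _ => Nat.zero_le _) hl))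
      refine Fin.lastCases ?_ (fun i => ?_) i
      · simpa using ht
      · simpa using ha i
    · rw [coeff_eq_zero_of_natDegree_lt (by simpa using hl)]
      simp
      positivity

end bounds


section counting

lemma box_card (N : ℕ) : (Finset.Icc (-(N : ℤ)) N).card = 2 * N + 1 := by
  rw [Int.card_Icc]; omega

open Classical in
lemma bad_count {k : ℕ} (P : MvPolynomial (Fin k) ℂ) (hP : P ≠ 0) (N : ℕ) :
    (((Fintype.piFinset (fun _ : Fin k => Finset.Icc (-(N : ℤ)) N)).filter
      (fun a => MvPolynomial.eval (fun i => (a i : ℂ)) P = 0)).card : ℝ) * (2 * N + 1) ≤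
      P.totalDegree * (2 * N + 1) ^ k := by
  set S : Finset ℂ := (Finset.Icc (-(N : ℤ)) N).image (fun z : ℤ => (z : ℂ)) with hS
  have hSc : S.card = 2 * N + 1 := by
    rw [hS, Finset.card_image_of_injective _ Int.cast_injective, box_card]
  have h := MvPolynomial.schwartz_zippel_totalDegree hP S
  rw [hSc] at h
  have hpos : (0 : ℚ≥0) < ((2 * N + 1 : ℕ) : ℚ≥0) := by positivity
  rw [div_le_div_iff₀ (by positivity) hpos] at h
  have h' : (Finset.card {f ∈ Fintype.piFinset fun _ : Fin k ↦ S | MvPolynomial.eval f P = 0}) * (2 * N + 1) ≤ P.totalDegree * (2 * N + 1) ^ k := by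
    exact_mod_cast h
  have hle : ((Fintype.piFinset (fun _ : Fin k => Finset.Icc (-(N : ℤ)) N)).filter
      (fun a => MvPolynomial.eval (fun i => (a i : ℂ)) P = 0)).card ≤
      (Finset.card {f ∈ Fintype.piFinset fun _ : Fin k ↦ S | MvPolynomial.eval f P = 0}) := by
    apply Finset.card_le_card_of_injOn (fun a i => ((a i : ℤ) : ℂ))
    · intro a ha
      simp only [Finset.coe_filter, Fintype.mem_piFinset, Set.mem_setOf_eq] at ha ⊢
      exact ⟨fun i => Finset.mem_image_of_mem _ (ha.1 i), ha.2⟩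
    · intro a _ b _ hab
      funext i
      exact Int.cast_injective (congrFun hab i)
  have h2 := (Nat.mul_le_mul_right (2 * N + 1) hle).trans h'
  exact_mod_cast h2

open Classical in
theorem count_core {k : ℕ} (ε : ℝ) (hε : 0 < ε) (G : Subgroup (Equiv.Perm (Fin (k + 1)))) :
    ∃ D : ℝ, 0 ≤ D ∧ ∀ N : ℕ, 1 ≤ N → ∀ T : Finset (Fin (k + 1) → ℤ),
      (∀ a ∈ T, (∀ i, |a i| ≤ N) ∧ HasGaloisGroup (k + 1) (genPoly fun i => (a i : ℚ)) G) →
      (T.card : ℝ) ≤ D * (N : ℝ) ^ ((k : ℝ) + 1 / (G.index : ℝ) + ε) := by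
  obtain ⟨Ψ, hm, hd, hΨ⟩ := exists_resolvent G
  obtain ⟨P, hP, hgood⟩ := exists_good G Ψ hm hd hΨ
  obtain ⟨E, K, hEK⟩ := uniform_bounds Ψ
  have hidx : 1 ≤ G.index := Nat.one_le_iff_ne_zero.2 Subgroup.index_ne_zero_of_finite
  obtain ⟨Cst, hC0, hBP⟩ := BP G.index E K hidx ε hε
  refine ⟨(P.totalDegree + Cst) * 3 ^ k, by positivity, fun N hN T hT => ?_⟩
  set B := Fintype.piFinset (fun _ : Fin k => Finset.Icc (-(N : ℤ)) N) with hB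
  have hBc : (B.card : ℝ) = (2 * N + 1) ^ k := by
    rw [hB, Fintype.card_piFinset_const, box_card]; push_cast; rfl
  have hmap : ∀ a ∈ T, (Fin.init a : Fin k → ℤ) ∈ B := by
    intro a ha
    rw [hB, Fintype.mem_piFinset]
    intro i
    rw [Finset.mem_Icc]
    exact abs_le.1 ((hT a ha).1 i.castSucc)
  have hsum := Finset.card_eq_sum_card_fiberwise (f := fun a : Fin (k + 1) → ℤ => (Fin.init a : Fin k → ℤ)) (s := T) (t := B) hmap
  have hN1 : (1 : ℝ) ≤ N := by exact_mod_cast hN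
  -- fibres
  have hinj : ∀ b : Fin k → ℤ, Set.InjOn (fun a : Fin (k + 1) → ℤ => a (Fin.last k)) (T.filter (fun a => (Fin.init a : Fin k → ℤ) = b) : Finset _) := by
    intro b a ha a' ha' haa
    simp only [Finset.coe_filter, Set.mem_setOf_eq] at ha ha'
    rw [← Fin.snoc_init_self a, ← Fin.snoc_init_self a', ha.2, ha'.2]
    simp only at haa
    rw [haa]
  have hfib1 : ∀ b : Fin k → ℤ, ((T.filter (fun a => (Fin.init a : Fin k → ℤ) = b)).card : ℝ) ≤ 2 * N + 1 := by
    intro b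
    have : (T.filter (fun a => (Fin.init a : Fin k → ℤ) = b)).card ≤ (Finset.Icc (-(N : ℤ)) N).card := by
      apply Finset.card_le_card_of_injOn _ _ (hinj b)
      intro a ha
      simp only [Finset.coe_filter, Set.mem_setOf_eq] at ha
      rw [Finset.mem_coe, Finset.mem_Icc]
      exact abs_le.1 ((hT a ha.1).1 (Fin.last k))
    rw [box_card] at this
    exact_mod_cast this
  have hfib2 : ∀ b ∈ B, MvPolynomial.eval (fun i => (b i : ℂ)) P ≠ 0 →
      ((T.filter (fun a => (Fin.init a : Fin k → ℤ) = b)).card : ℝ) ≤ Cst * (N : ℝ) ^ (1 / (G.index : ℝ) + ε) := by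
    intro b hb hPb
    rw [← Finset.card_image_of_injOn (hinj b)]
    have hb' : ∀ i, |b i| ≤ N := by
      intro i
      rw [hB, Fintype.mem_piFinset] at hb
      exact abs_le.2 (Finset.mem_Icc.1 (hb i))
    apply hBP N hN (Ψ.map (specHom b)) (hm.map _) ((hm.natDegree_map _).trans hd) (hgood b hPb)
      (hEK b).1 ((hEK b).2 N hN hb')
    intro t ht
    obtain ⟨a, ha, rfl⟩ := Finset.mem_image.1 ht
    rw [Finset.mem_filter] at ha
    refine ⟨(hT a ha.1).1 _, ?_⟩
    obtain ⟨z, hz⟩ := gal_root (Nat.succ_pos k) G Ψ hΨ a _ rfl (hT a ha.1).2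
    refine ⟨z, ?_⟩
    rw [specHom_evalEval, ← ha.2, Fin.snoc_init_self]
    exact hz
  have hbad := bad_count P hP N
  rw [← hB] at hbad
  set M : ℝ := (N : ℝ) ^ (1 / (G.index : ℝ) + ε) with hM
  have hM1 : 1 ≤ M := Real.one_le_rpow hN1 (by positivity)
  have htot : (T.card : ℝ) ≤ P.totalDegree * (2 * N + 1) ^ k + (2 * N + 1) ^ k * (Cst * M) := by
    rw [hsum]
    push_cast
    rw [← Finset.sum_filter_add_sum_filter_not B (fun b => MvPolynomial.eval (fun i => (b i : ℂ)) P = 0)]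
    apply add_le_add
    · refine (Finset.sum_le_card_nsmul _ _ (2 * (N : ℝ) + 1) (fun b _ => hfib1 b)).trans ?_
      rw [nsmul_eq_mul]
      exact hbad
    · refine (Finset.sum_le_card_nsmul _ _ (Cst * M) (fun b hb => ?_)).trans ?_
      · rw [Finset.mem_filter] at hb
        exact hfib2 b hb.1 hb.2
      · rw [nsmul_eq_mul]
        apply mul_le_mul_of_nonneg_right _ (by positivity)
        rw [← hBc]
        exact_mod_cast Finset.card_filter_le _ _
  have hpow : ((2 * N + 1 : ℝ)) ^ k ≤ 3 ^ k * (N : ℝ) ^ k := by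
    rw [← mul_pow]
    exact pow_le_pow_left₀ (by positivity) (by linarith) k
  have hexp : (N : ℝ) ^ ((k : ℝ) + 1 / (G.index : ℝ) + ε) = (N : ℝ) ^ k * M := by
    rw [add_assoc, Real.rpow_add (by linarith), Real.rpow_natCast]
  rw [hexp]
  have hdeg : (0 : ℝ) ≤ P.totalDegree := by positivity
  calc (T.card : ℝ) ≤ P.totalDegree * (2 * N + 1) ^ k + (2 * N + 1) ^ k * (Cst * M) := htot
    _ ≤ (P.totalDegree * M) * (2 * N + 1) ^ k + (2 * N + 1) ^ k * (Cst * M) := by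
        gcongr
        exact le_mul_of_one_le_right hdeg hM1
    _ = (P.totalDegree + Cst) * M * (2 * N + 1) ^ k := by ring
    _ ≤ (P.totalDegree + Cst) * M * (3 ^ k * (N : ℝ) ^ k) := by
        apply mul_le_mul_of_nonneg_left hpow (by positivity)
    _ = (P.totalDegree + Cst) * 3 ^ k * ((N : ℝ) ^ k * M) := by ring

end counting

/-- There are at most `O_{n,ε}(H^(n-1+δ_G+ε))` monic integer polynomials of degree `n` and
height at most `H` which are separable and have Galois group `G`, where
`δ_G = 1/[Sₙ : G]`. -/
theorem count_polynomials_with_galois_group (n : ℕ) (hn : 0 < n) (ε : ℝ) (hε : 0 < ε)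
    (G : Subgroup (Equiv.Perm (Fin n))) :
    ∃ C : ℝ, ∀ H : ℝ, 1 ≤ H →
      (Set.ncard {a : Fin n → ℤ |
          (∀ i, (|a i| : ℝ) ≤ H) ∧
          (X ^ n + ∑ i : Fin n, Polynomial.C ((a i : ℚ)) * X ^ (n - 1 - (i : ℕ)) :
            Polynomial ℚ).Separable ∧
          HasGaloisGroup n
            (X ^ n + ∑ i : Fin n, Polynomial.C ((a i : ℚ)) * X ^ (n - 1 - (i : ℕ))) G} : ℝ)
        ≤ C * H ^ ((n : ℝ) - 1 + 1 / (G.index : ℝ) + ε) := by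
  obtain ⟨k, rfl⟩ : ∃ k, n = k + 1 := ⟨n - 1, by omega⟩
  obtain ⟨D, hD, hcore⟩ := count_core ε hε G
  refine ⟨D, fun H hH => ?_⟩
  have hH0 : (0 : ℝ) ≤ H := by linarith
  have hN : 1 ≤ ⌊H⌋₊ := Nat.le_floor (by simpa using hH)
  set s := {a : Fin (k + 1) → ℤ |
          (∀ i, (|a i| : ℝ) ≤ H) ∧
          (X ^ (k + 1) + ∑ i : Fin (k + 1), Polynomial.C ((a i : ℚ)) * X ^ (k + 1 - 1 - (i : ℕ)) :
            Polynomial ℚ).Separable ∧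
          HasGaloisGroup (k + 1)
            (X ^ (k + 1) + ∑ i : Fin (k + 1), Polynomial.C ((a i : ℚ)) * X ^ (k + 1 - 1 - (i : ℕ))) G} with hs
  have hbd : ∀ a ∈ s, ∀ i, |a i| ≤ (⌊H⌋₊ : ℤ) := by
    intro a ha i
    have h1 := ha.1 i
    have h2 : ((|a i| : ℤ) : ℝ) ≤ H := by push_cast; exact h1
    rw [Int.natCast_floor_eq_floor hH0]
    exact Int.le_floor.2 h2
  have hfin : s.Finite := by
    refine (Finset.finite_toSet (Fintype.piFinset (fun _ : Fin (k + 1) => Finset.Icc (-(⌊H⌋₊ : ℤ)) ⌊H⌋₊))).subset ?_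
    intro a ha
    rw [Finset.mem_coe, Fintype.mem_piFinset]
    intro i
    exact Finset.mem_Icc.2 (abs_le.1 (hbd a ha i))
  rw [Set.ncard_eq_toFinset_card s hfin]
  have h := hcore ⌊H⌋₊ hN hfin.toFinset (fun a ha => by
    rw [Set.Finite.mem_toFinset] at ha
    exact ⟨hbd a ha, ha.2.2⟩)
  refine h.trans (mul_le_mul_of_nonneg_left ?_ hD)
  have he : ((k + 1 : ℕ) : ℝ) - 1 + 1 / (G.index : ℝ) + ε = (k : ℝ) + 1 / (G.index : ℝ) + ε := by
    push_cast; ring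
  rw [he]
  exact Real.rpow_le_rpow (by positivity) (Nat.floor_le hH0) (by positivity)
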